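/- arXiv:1908.11093 — 3 statements merged into one kernel-verified Lean document; each statement's English description precedes it below -/
import Mathlib

section
/- Let D be the unit disk, G its Dirichlet Green's function, Ω > 0, λ > 1/|D|, and define ℰ(w) = (1/2)∫_D∫_D G(x,y)w(x)w(y) dx dy + (Ω/2)∫_D |x|² w(x) dx on K_λ(D) = {w ∈ L^∞(D) : 0 ≤ w ≤ λ a.e., ∫_D w = 1}. Then ℰ is bounded above on K_λ(D) and attains its supremum: there exists w^λ ∈ K_λ(D) with ℰ(w^λ) = sup_{K_λ(D)} ℰ. -/
open MeasureTheory Real Set Filter Topology ENNReal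
noncomputable section
abbrev E2 := EuclideanSpace ℝ (Fin 2)
def diskD : Set E2 := Metric.ball 0 1
def greenh (x y : E2) : ℝ := -(1/(2*π)) * Real.log ‖y‖ - (1/(2*π)) * Real.log ‖x - (‖y‖^2)⁻¹ • y‖
def greenG (x y : E2) : ℝ := -(1/(2*π)) * Real.log ‖x - y‖ - greenh x y
def muD : Measure E2 := volume.restrict diskD
def Kset (lam : ℝ) : Set (E2 → ℝ) :=
  {w | AEMeasurable w muD ∧ (∀ᵐ x ∂muD, 0 ≤ w x ∧ w x ≤ lam) ∧ ∫ x, w x ∂muD = 1}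
def Efun (w : E2 → ℝ) : ℝ := (1/2) * ∫ x in diskD, ∫ y in diskD, greenG x y * w x * w y
def calE (Ω : ℝ) (w : E2 → ℝ) : ℝ := Efun w + (Ω/2) * ∫ x in diskD, ‖x‖^2 * w x

lemma ww_int {α : Type*} [MeasurableSpace α] {μ : Measure α} [IsFiniteMeasure μ]
    {w : α → ℝ} {C : ℝ} (hm : AEStronglyMeasurable w μ) (hb : ∀ᵐ a ∂μ, ‖w a‖ ≤ C) :
    AEStronglyMeasurable (fun p : α × α => w p.1 * w p.2) (μ.prod μ) ∧
    ∀ᵐ p ∂(μ.prod μ), ‖w p.1 * w p.2‖ ≤ C ^ 2 := by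
  refine ⟨hm.comp_fst.mul hm.comp_snd, ?_⟩
  have h1 : ∀ᵐ p ∂(μ.prod μ), ‖w p.1‖ ≤ C := Measure.quasiMeasurePreserving_fst.ae hb
  have h2 : ∀ᵐ p ∂(μ.prod μ), ‖w p.2‖ ≤ C := Measure.quasiMeasurePreserving_snd.ae hb
  filter_upwards [h1, h2] with p h1 h2
  rw [norm_mul, sq]
  exact mul_le_mul h1 h2 (norm_nonneg _) ((norm_nonneg _).trans h1)

lemma quad_cont_set {α X : Type*} [MeasurableSpace α] [TopologicalSpace X]
    {μ : Measure α} [IsFiniteMeasure μ]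
    (w : X → α → ℝ) (C : ℝ) (hm : ∀ x, AEStronglyMeasurable (w x) μ)
    (hb : ∀ x, ∀ᵐ a ∂μ, ‖w x a‖ ≤ C)
    (hc : ∀ s, MeasurableSet s → Continuous fun x => ∫ a in s, w x a ∂μ)
    (s : Set (α × α)) (hs : MeasurableSet s) :
    Continuous fun x => ∫ p in s, w x p.1 * w x p.2 ∂(μ.prod μ) := by
  have hI : ∀ x, Integrable (fun p : α × α => w x p.1 * w x p.2) (μ.prod μ) := fun x =>
    Integrable.of_bound (ww_int (hm x) (hb x)).1 (C ^ 2) (ww_int (hm x) (hb x)).2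
  induction s, hs using MeasurableSpace.induction_on_inter generateFrom_prod.symm
    isPiSystem_prod with
  | empty => simpa using continuous_const
  | basic t ht =>
    obtain ⟨a, ha, b, hb', rfl⟩ := ht
    have : ∀ x, ∫ p in a ×ˢ b, w x p.1 * w x p.2 ∂(μ.prod μ)
        = (∫ p in a, w x p ∂μ) * ∫ p in b, w x p ∂μ := fun x => setIntegral_prod_mul _ _ _ _
    simp only [this]
    exact (hc a ha).mul (hc b hb')
  | compl t ht ih =>
    have : ∀ x, ∫ p in tᶜ, w x p.1 * w x p.2 ∂(μ.prod μ)
        = (∫ p in univ, w x p ∂μ) * (∫ p in univ, w x p ∂μ)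
          - ∫ p in t, w x p.1 * w x p.2 ∂(μ.prod μ) := fun x => by
      rw [setIntegral_compl ht (hI x), integral_prod_mul (w x) (w x)]
      simp
    simp only [this]
    exact ((hc _ .univ).mul (hc _ .univ)).sub ih
  | iUnion f hd hf ih =>
    have : ∀ x, ∫ p in ⋃ i, f i, w x p.1 * w x p.2 ∂(μ.prod μ)
        = ∑' i, ∫ p in f i, w x p.1 * w x p.2 ∂(μ.prod μ) := fun x =>
      (hasSum_integral_iUnion hf hd (hI x).integrableOn).tsum_eq.symm
    simp only [this]
    refine continuous_tsum (u := fun i => C ^ 2 * (μ.prod μ).real (f i)) ih ?_ ?_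
    · apply Summable.mul_left
      apply ENNReal.summable_toReal
      rw [← measure_iUnion hd hf]
      exact measure_ne_top _ _
    · intro i x
      exact norm_setIntegral_le_of_norm_le_const_ae (measure_lt_top _ _)
        (ae_restrict_of_ae (ww_int (hm x) (hb x)).2)

lemma quad_cont {α X : Type*} [MeasurableSpace α] [TopologicalSpace X]
    {μ : Measure α} [IsFiniteMeasure μ]
    (w : X → α → ℝ) (C : ℝ) (hm : ∀ x, AEStronglyMeasurable (w x) μ)
    (hb : ∀ x, ∀ᵐ a ∂μ, ‖w x a‖ ≤ C)
    (hc : ∀ s, MeasurableSet s → Continuous fun x => ∫ a in s, w x a ∂μ)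
    (F : α × α → ℝ) (hF : Integrable F (μ.prod μ)) :
    Continuous fun x => ∫ p, (w x p.1 * w x p.2) * F p ∂(μ.prod μ) := by
  have hI : ∀ x (F : α × α → ℝ), Integrable F (μ.prod μ) →
      Integrable (fun p : α × α => (w x p.1 * w x p.2) * F p) (μ.prod μ) := fun x F hF =>
    hF.bdd_mul (ww_int (hm x) (hb x)).1 (ww_int (hm x) (hb x)).2
  refine Integrable.induction (μ := μ.prod μ) (fun F : α × α → ℝ =>
    Continuous fun x => ∫ p, (w x p.1 * w x p.2) * F p ∂(μ.prod μ)) ?_ ?_ ?_ ?_ hF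
  · intro c s hs hs'
    have : ∀ x, ∫ p, (w x p.1 * w x p.2) * (s.indicator (fun _ => c) p) ∂(μ.prod μ)
       = (∫ p in s, w x p.1 * w x p.2 ∂(μ.prod μ)) * c := fun x => by
      rw [← integral_mul_const, ← integral_indicator hs]
      congr 1 with p
      by_cases h : p ∈ s <;> simp [h]
    simp only [this]
    exact (quad_cont_set w C hm hb hc s hs).mul_const c
  · intro f g _ hf hg ihf ihg
    have : ∀ x, ∫ p, (w x p.1 * w x p.2) * ((f + g) p) ∂(μ.prod μ)
      = (∫ p, (w x p.1 * w x p.2) * f p ∂(μ.prod μ)) + ∫ p, (w x p.1 * w x p.2) * g p ∂(μ.prod μ) :=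
      fun x => by
        rw [← integral_add (hI x f hf) (hI x g hg)]
        simp [mul_add]
    simp only [this]
    exact ihf.add ihg
  · rw [← isSeqClosed_iff_isClosed]
    intro u f hu hlim
    refine TendstoUniformly.continuous (F := fun n x => ∫ p, (w x p.1 * w x p.2) * (u n p) ∂(μ.prod μ)) (p := atTop) ?_ (Frequently.of_forall hu)
    rw [Metric.tendstoUniformly_iff]
    intro ε hε
    have h0 : Tendsto (fun n => C ^ 2 * ‖f - u n‖) atTop (𝓝 0) := by
      have := (tendsto_const_nhds (x := f)).sub hlim
      rw [sub_self] at this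
      simpa using this.norm.const_mul (C ^ 2)
    filter_upwards [h0.eventually (gt_mem_nhds hε)] with n hn x
    refine lt_of_le_of_lt ?_ hn
    rw [dist_eq_norm, ← integral_sub (hI x _ (L1.integrable_coeFn f)) (hI x _ (L1.integrable_coeFn (u n))),
      L1.norm_eq_integral_norm, ← integral_const_mul]
    refine norm_integral_le_of_norm_le ((L1.integrable_coeFn _).norm.const_mul _) ?_
    filter_upwards [(ww_int (hm x) (hb x)).2, Lp.coeFn_sub f (u n)] with p hp hq
    rw [hq, ← mul_sub, norm_mul]
    exact mul_le_mul_of_nonneg_right hp (norm_nonneg _)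
  · intro f g hfg hf ih
    refine (continuous_congr fun x => integral_congr_ae ?_).1 ih
    filter_upwards [hfg] with p hp
    rw [hp]

lemma exists_max {α : Type*} [MeasurableSpace α] 
    {μ : Measure α} [IsFiniteMeasure μ] (K : Set (α → ℝ)) (lam : ℝ)
    (hK : K = {w | AEMeasurable w μ ∧ (∀ᵐ x ∂μ, 0 ≤ w x ∧ w x ≤ lam) ∧ ∫ x, w x ∂μ = 1})
    (hne : K.Nonempty) (hl : 0 ≤ lam)
    (F : α × α → ℝ) (hF : Integrable F (μ.prod μ)) :
    ∃ w ∈ K, ∀ v ∈ K, ∫ p, (v p.1 * v p.2) * F p ∂(μ.prod μ)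
      ≤ ∫ p, (w p.1 * w p.2) * F p ∂(μ.prod μ) := by
  let I : ∀ s : Set α, MeasurableSet s → Lp ℝ 2 μ := fun s hs =>
    indicatorConstLp 2 hs (measure_ne_top μ s) 1
  let R := ((measureUnivNNReal μ : ℝ) ^ (2 : ℝ≥0∞).toReal⁻¹ * lam)
  let S : Set (WeakDual ℝ (Lp ℝ 2 μ)) :=
    (WeakDual.toStrongDual ⁻¹' Metric.closedBall 0 R) ∩
      {φ | (∀ s (hs : MeasurableSet s), 0 ≤ φ (I s hs) ∧ φ (I s hs) ≤ lam * μ.real s) ∧ 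
        φ (I univ .univ) = 1}
  let d : WeakDual ℝ (Lp ℝ 2 μ) → Lp ℝ 2 μ := fun φ =>
    (InnerProductSpace.toDual ℝ (Lp ℝ 2 μ)).symm (WeakDual.toStrongDual φ)
  have hd : ∀ φ s (hs : MeasurableSet s), ∫ a in s, d φ a ∂μ = φ (I s hs) := by
    intro φ s hs
    rw [← L2.inner_indicatorConstLp_one (𝕜 := ℝ) hs (measure_ne_top μ s), real_inner_comm]
    exact InnerProductSpace.toDual_symm_apply
  have hdint : ∀ φ, Integrable (d φ) μ := fun φ => (Lp.memLp (d φ)).integrable (by norm_num)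
  have hScomp : IsCompact S := by
    refine (WeakDual.isCompact_closedBall _ _).inter_right ?_
    simp only [setOf_and, setOf_forall]
    refine IsClosed.inter (isClosed_iInter fun s => isClosed_iInter fun hs => ?_) ?_
    · exact (isClosed_le continuous_const (WeakDual.eval_continuous _)).inter
        (isClosed_le (WeakDual.eval_continuous _) continuous_const)
    · exact isClosed_eq (WeakDual.eval_continuous _) continuous_const
  have hSK : ∀ φ ∈ S, (d φ : α → ℝ) ∈ K := by
    intro φ hφ
    rw [hK]
    refine ⟨(Lp.aestronglyMeasurable _).aemeasurable, ?_, ?_⟩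
    · have h1 : 0 ≤ᵐ[μ] d φ := ae_nonneg_of_forall_setIntegral_nonneg (hdint φ) fun s hs _ => by
        rw [hd φ s hs]; exact (hφ.2.1 s hs).1
      have h2 : d φ ≤ᵐ[μ] fun _ => lam :=
        ae_le_of_forall_setIntegral_le (hdint φ) (integrable_const _) fun s hs _ => by
        rw [hd φ s hs]
        refine (hφ.2.1 s hs).2.trans (le_of_eq ?_)
        simp [mul_comm]
      filter_upwards [h1, h2] with x h1 h2 using ⟨h1, h2⟩
    · rw [← setIntegral_univ, hd φ _ .univ]; exact hφ.2.2
  have hKS : ∀ v ∈ K, ∃ φ ∈ S, v =ᵐ[μ] d φ := by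
    intro v hv
    rw [hK] at hv
    obtain ⟨hvm, hvb, hv1⟩ := hv
    have hvn : ∀ᵐ a ∂μ, ‖v a‖ ≤ lam := by
      filter_upwards [hvb] with a ha
      rw [Real.norm_of_nonneg ha.1]; exact ha.2
    have hLp : MemLp v 2 μ := MemLp.of_bound hvm.aestronglyMeasurable lam hvn
    have hvi : Integrable v μ := hLp.integrable (by norm_num)
    let φ : WeakDual ℝ (Lp ℝ 2 μ) := WeakDual.toStrongDual.symm
      (InnerProductSpace.toDual ℝ (Lp ℝ 2 μ) hLp.toLp)
    have hdφ : d φ = hLp.toLp := by simp [d, φ]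
    have hvd : v =ᵐ[μ] d φ := by rw [hdφ]; exact hLp.coeFn_toLp.symm
    have hφI : ∀ s (hs : MeasurableSet s), φ (I s hs) = ∫ a in s, v a ∂μ := fun s hs => by
      rw [← hd φ s hs]
      exact integral_congr_ae (ae_restrict_of_ae hvd.symm)
    refine ⟨φ, ⟨?_, ?_, ?_⟩, hvd⟩
    · simp only [mem_preimage, mem_closedBall_zero_iff]
      have : ‖WeakDual.toStrongDual φ‖ = ‖hLp.toLp‖ := by simp [φ]
      rw [this]
      refine Lp.norm_le_of_ae_bound hl ?_
      filter_upwards [hvn, hLp.coeFn_toLp] with a h1 h2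
      rwa [h2]
    · intro s hs
      rw [hφI]
      refine ⟨integral_nonneg_of_ae (ae_restrict_of_ae (hvb.mono fun a h => h.1)), ?_⟩
      have := integral_mono_ae (μ := μ.restrict s) hvi.integrableOn (integrable_const lam)
        (ae_restrict_of_ae (hvb.mono fun a h => h.2))
      refine this.trans (le_of_eq ?_)
      simp [mul_comm]
    · rw [hφI, setIntegral_univ, hv1]
  have hcont : Continuous fun φ : S => ∫ p, (d φ p.1 * d φ p.2) * F p ∂(μ.prod μ) := by
    refine quad_cont (fun φ : S => (d φ : α → ℝ)) lam (fun φ => Lp.aestronglyMeasurable _) ?_ ?_ F hF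
    · intro φ
      have := hSK φ φ.2
      rw [hK] at this
      filter_upwards [this.2.1] with a ha
      rw [Real.norm_of_nonneg ha.1]; exact ha.2
    · intro s hs
      simp only [hd _ s hs]
      exact (WeakDual.eval_continuous _).comp continuous_subtype_val
  have hSne : S.Nonempty := by
    obtain ⟨v, hv⟩ := hne
    obtain ⟨φ, h, _⟩ := hKS v hv
    exact ⟨φ, h⟩
  obtain ⟨φ, hφ, hmax⟩ := hScomp.exists_isMaxOn hSne
    (f := fun φ => ∫ p, (d φ p.1 * d φ p.2) * F p ∂(μ.prod μ)) (continuousOn_iff_continuous_restrict.2 hcont)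
  refine ⟨d φ, hSK φ hφ, fun v hv => ?_⟩
  obtain ⟨ψ, hψ, hvψ⟩ := hKS v hv
  refine le_trans (le_of_eq ?_) (hmax hψ)
  refine integral_congr_ae ?_
  have h1 : ∀ᵐ p ∂(μ.prod μ), v p.1 = d ψ p.1 := Measure.quasiMeasurePreserving_fst.ae hvψ
  have h2 : ∀ᵐ p ∂(μ.prod μ), v p.2 = d ψ p.2 := Measure.quasiMeasurePreserving_snd.ae hvψ
  filter_upwards [h1, h2] with p h1 h2
  rw [h1, h2]
lemma inv_norm_int : Integrable (fun z : E2 => (Iio (2:ℝ)).indicator (fun t => t⁻¹) ‖z‖) volume := by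
  rw [integrable_fun_norm_addHaar volume (f := (Iio (2:ℝ)).indicator (fun t => t⁻¹))]
  have h2 : IntegrableOn ((Iio (2:ℝ)).indicator (fun _ : ℝ => (1:ℝ))) (Ioi 0) volume := by
    rw [integrableOn_indicator_iff measurableSet_Iio, inter_comm, Ioi_inter_Iio]
    simp
  refine h2.congr_fun (fun y hy => ?_) measurableSet_Ioi
  have : y ≠ 0 := ne_of_gt hy
  by_cases h : y ∈ Iio (2:ℝ) <;> simp [h, this]

instance : IsFiniteMeasure muD := by
  unfold muD diskD
  exact ⟨by simpa using Metric.measure_ball_lt_top⟩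

lemma inv_dist_int : Integrable (fun p : E2 × E2 => ‖p.1 - p.2‖⁻¹) (muD.prod muD) := by
  have h1 : Integrable (fun _ : E2 => (1:ℝ)) muD := integrable_const _
  have h := Integrable.convolution_integrand (ContinuousLinearMap.mul ℝ ℝ) h1 inv_norm_int
  have h' := h.restrict (s := diskD ×ˢ univ)
  have e : (volume.prod muD).restrict (diskD ×ˢ (univ : Set E2)) = muD.prod muD := by
    rw [← Measure.prod_restrict, Measure.restrict_univ]; rfl
  rw [e] at h'
  refine h'.congr ?_
  have a1 : ∀ᵐ p : E2 ∂muD, p ∈ diskD := ae_restrict_mem Metric.isOpen_ball.measurableSet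
  have b1 : ∀ᵐ p ∂(muD.prod muD), p.1 ∈ diskD := Measure.quasiMeasurePreserving_fst.ae a1
  have b2 : ∀ᵐ p ∂(muD.prod muD), p.2 ∈ diskD := Measure.quasiMeasurePreserving_snd.ae a1
  filter_upwards [b1, b2] with p h1 h2
  simp only [diskD, mem_ball_zero_iff] at h1 h2
  have : ‖p.1 - p.2‖ ∈ Iio (2:ℝ) := by
    have := norm_sub_le p.1 p.2
    simp only [mem_Iio]; linarith
  simp [indicator_of_mem this]

lemma greenG_bound (x y : E2) (hx : ‖x‖ < 1) (hy : ‖y‖ < 1) (hxy : x ≠ y) (hy0 : y ≠ 0) :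
    ‖greenG x y‖ ≤ (1/(2*π)) * (2 * ‖x - y‖⁻¹) := by
  have hd : 0 < ‖x - y‖ := norm_pos_iff.2 (sub_ne_zero.2 hxy)
  have hyp : 0 < ‖y‖ := norm_pos_iff.2 hy0
  set A := ‖x - (‖y‖^2)⁻¹ • y‖ with hA
  have hA2 : (‖y‖ * A)^2 = ‖x‖^2 * ‖y‖^2 - 2 * inner ℝ x y + 1 := by
    rw [mul_pow, hA, norm_sub_sq_real, inner_smul_right, norm_smul, norm_inv, norm_pow, norm_norm]
    field_simp
  have hB2 : ‖x - y‖^2 = ‖x‖^2 - 2 * inner ℝ x y + ‖y‖^2 := norm_sub_sq_real _ _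
  have hA0 : 0 ≤ A := norm_nonneg _
  have hin := abs_le.1 (abs_real_inner_le_norm x y)
  have hlow : ‖x - y‖ ≤ ‖y‖ * A := by
    refine (abs_le_of_sq_le_sq' ?_ (by positivity)).2
    nlinarith [mul_nonneg (show 0 ≤ 1 - ‖x‖^2 by nlinarith [norm_nonneg x]) (show 0 ≤ 1 - ‖y‖^2 by nlinarith)]
  have hup : ‖y‖ * A ≤ 2 := by
    have hxy1 : ‖x‖ * ‖y‖ ≤ 1 := by nlinarith [norm_nonneg x]
    have : 0 ≤ ‖x‖ * ‖y‖ := by positivity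
    refine abs_le_of_sq_le_sq' ?_ (by norm_num) |>.2
    nlinarith
  have hApos : 0 < A := by
    by_contra h
    have : A = 0 := le_antisymm (not_lt.1 h) hA0
    rw [this, mul_zero] at hlow
    linarith
  have hG : greenG x y = (1/(2*π)) * Real.log ((‖y‖ * A) / ‖x - y‖) := by
    rw [Real.log_div (by positivity) hd.ne', Real.log_mul hyp.ne' hApos.ne']
    simp only [greenG, greenh, ← hA]
    ring
  rw [hG, norm_mul, Real.norm_of_nonneg (by positivity : 0 ≤ 1/(2*π))]
  refine mul_le_mul_of_nonneg_left ?_ (by positivity)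
  rw [Real.norm_of_nonneg (Real.log_nonneg ((one_le_div hd).2 hlow))]
  refine (Real.log_le_self (by positivity)).trans ?_
  rw [div_eq_mul_inv]
  exact mul_le_mul_of_nonneg_right hup (by positivity)

lemma greenG_int : Integrable (fun p : E2 × E2 => greenG p.1 p.2) (muD.prod muD) := by
  refine ((inv_dist_int.const_mul 2).const_mul (1/(2*π))).mono' ?_ ?_
  · refine Measurable.aestronglyMeasurable ?_
    unfold greenG greenh
    fun_prop
  have a1 : ∀ᵐ p : E2 ∂muD, p ∈ diskD := ae_restrict_mem Metric.isOpen_ball.measurableSet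
  have a0 : ∀ z : E2, ∀ᵐ p : E2 ∂muD, p ≠ z := fun z => by
    refine ae_restrict_of_ae ?_
    simp [ae_iff]
  have b1 : ∀ᵐ p ∂(muD.prod muD), p.1 ∈ diskD := Measure.quasiMeasurePreserving_fst.ae a1
  have b2 : ∀ᵐ p ∂(muD.prod muD), p.2 ∈ diskD := Measure.quasiMeasurePreserving_snd.ae a1
  have b3 : ∀ᵐ p ∂(muD.prod muD), p.2 ≠ 0 := Measure.quasiMeasurePreserving_snd.ae (a0 0)
  have b4 : ∀ᵐ p ∂(muD.prod muD), p.1 ≠ p.2 := by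
    rw [Measure.ae_prod_iff_ae_ae]
    · exact Eventually.of_forall fun x => (a0 x).mono fun y h => h.symm
    · exact (measurableSet_eq_fun measurable_fst measurable_snd).compl
  filter_upwards [b1, b2, b3, b4] with p h1 h2 h3 h4
  simp only [diskD, mem_ball_zero_iff] at h1 h2
  exact greenG_bound _ _ h1 h2 h4 h3

lemma normsq_int : Integrable (fun p : E2 × E2 => ‖p.1‖^2) (muD.prod muD) := by
  refine Integrable.of_bound (by fun_prop) 1 ?_
  have a1 : ∀ᵐ p : E2 ∂muD, p ∈ diskD := ae_restrict_mem Metric.isOpen_ball.measurableSet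
  have b1 : ∀ᵐ p ∂(muD.prod muD), p.1 ∈ diskD := Measure.quasiMeasurePreserving_fst.ae a1
  filter_upwards [b1] with p h1
  simp only [diskD, mem_ball_zero_iff] at h1
  rw [norm_pow, norm_norm]
  exact pow_le_one₀ (norm_nonneg _) h1.le

lemma calE_eq (Ω lam : ℝ) (w : E2 → ℝ) (hw : w ∈ Kset lam) :
    calE Ω w = ∫ p, (w p.1 * w p.2) * ((1/2) * greenG p.1 p.2 + (Ω/2) * ‖p.1‖^2) ∂(muD.prod muD) := by
  obtain ⟨hm, hb, h1⟩ := hw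
  have hn : ∀ᵐ a ∂muD, ‖w a‖ ≤ lam := by
    filter_upwards [hb] with a ha
    rw [Real.norm_of_nonneg ha.1]; exact ha.2
  obtain ⟨hww, hwb⟩ := ww_int hm.aestronglyMeasurable hn
  have i1 : Integrable (fun p : E2 × E2 => (w p.1 * w p.2) * greenG p.1 p.2) (muD.prod muD) :=
    greenG_int.bdd_mul hww hwb
  have i2 : Integrable (fun p : E2 × E2 => (w p.1 * w p.2) * ‖p.1‖^2) (muD.prod muD) :=
    normsq_int.bdd_mul hww hwb
  have e1 : Efun w = (1/2) * ∫ p, (w p.1 * w p.2) * greenG p.1 p.2 ∂(muD.prod muD) := by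
    rw [integral_prod _ i1]
    unfold Efun
    change (1/2) * (∫ x, ∫ y, _ ∂muD ∂muD) = _
    congr 3 with x
    congr 1 with y
    ring
  have e2 : ∫ x in diskD, ‖x‖^2 * w x = ∫ p, (w p.1 * w p.2) * ‖p.1‖^2 ∂(muD.prod muD) := by
    have := integral_prod_mul (μ := muD) (ν := muD) (fun x => ‖x‖^2 * w x) w
    rw [h1, mul_one] at this
    refine this.symm.trans ?_
    congr 1 with p
    ring
  unfold calE
  rw [e1, e2, ← integral_const_mul, ← integral_const_mul,
    ← integral_add (i1.const_mul _) (i2.const_mul _)]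
  congr 1 with p
  ring

theorem stmt5 (Ω lam : ℝ) (hΩ : 0 < Ω) (hlam : 1/π < lam) :
    BddAbove (calE Ω '' Kset lam) ∧
    ∃ w ∈ Kset lam, ∀ v ∈ Kset lam, calE Ω v ≤ calE Ω w := by
  have hp : 0 < 1/π := by positivity
  have hne : (Kset lam).Nonempty := by
    refine ⟨fun _ => 1/π, aemeasurable_const, Eventually.of_forall fun x => ⟨hp.le, hlam.le⟩, ?_⟩
    have : muD.real univ = π := by
      simp [muD, diskD, Measure.real, EuclideanSpace.volume_ball_fin_two, Real.pi_pos.le]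
    rw [integral_const, this]
    simp [Real.pi_pos.ne']
  obtain ⟨w, hw, hmax⟩ := exists_max (μ := muD) (Kset lam) lam rfl hne (hp.le.trans hlam.le)
    (fun p => (1/2) * greenG p.1 p.2 + (Ω/2) * ‖p.1‖^2)
    ((greenG_int.const_mul _).add (normsq_int.const_mul _))
  have key : ∀ v ∈ Kset lam, calE Ω v ≤ calE Ω w := fun v hv => by
    rw [calE_eq Ω lam v hv, calE_eq Ω lam w hw]
    exact hmax v hv
  refine ⟨⟨calE Ω w, ?_⟩, w, hw, key⟩
  rintro _ ⟨v, hv, rfl⟩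
  exact key v hv
end
end

section
/- Let D be the unit disk, λ > 1/|D|, ε = (πλ)^{-1/2}. The maximum of ℰ over K_λ(D) satisfies sup_{K_λ(D)} ℰ = -(1/4π) ln ε + O(1) as λ → +∞: there exists C > 0 independent of λ such that -(1/4π)ln ε - C ≤ sup_{K_λ(D)} ℰ ≤ -(1/4π)ln ε + C. -/
open MeasureTheory Real Set Filter Topology ENNReal
noncomputable section
def Nxy (x y : E2) : ℝ := ‖y‖ * ‖x - (‖y‖^2)⁻¹ • y‖

lemma Nxy_sq (x y : E2) (hy : y ≠ 0) :
    (Nxy x y)^2 = 1 - 2 * inner ℝ x y + ‖x‖^2 * ‖y‖^2 := by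
  have hy' : ‖y‖ ≠ 0 := norm_ne_zero_iff.mpr hy
  unfold Nxy
  rw [mul_pow, norm_sub_sq_real, inner_smul_right, norm_smul, norm_inv, norm_pow, norm_norm]
  field_simp
  ring

lemma Nxy_nonneg (x y : E2) : 0 ≤ Nxy x y := by unfold Nxy; positivity

lemma mem_disk (x : E2) : x ∈ diskD ↔ ‖x‖ < 1 := by simp [diskD]

lemma prod_lt (x y : E2) (hx : x ∈ diskD) (hy : y ∈ diskD) : ‖x‖ * ‖y‖ < 1 := by
  rw [mem_disk] at hx hy
  nlinarith [norm_nonneg x, norm_nonneg y]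

lemma Nxy_lower (x y : E2) (hx : x ∈ diskD) (hy : y ∈ diskD) (h0 : y ≠ 0) :
    1 - ‖x‖ * ‖y‖ ≤ Nxy x y := by
  have := prod_lt x y hx hy
  have h1 := Nxy_sq x y h0
  have h2 := real_inner_le_norm x y
  exact abs_le_of_sq_le_sq' (by nlinarith) (Nxy_nonneg x y) |>.2

lemma Nxy_upper (x y : E2) (hx : x ∈ diskD) (hy : y ∈ diskD) (h0 : y ≠ 0) :
    Nxy x y ≤ 2 := by
  have := prod_lt x y hx hy
  have h1 := Nxy_sq x y h0
  have h2 := neg_le_of_abs_le (abs_real_inner_le_norm x y)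
  have h3 : 0 ≤ ‖x‖ * ‖y‖ := by positivity
  exact abs_le_of_sq_le_sq' (by nlinarith) (by norm_num) |>.2

lemma Nxy_ge (x y : E2) (hx : x ∈ diskD) (hy : y ∈ diskD) (h0 : y ≠ 0) :
    ‖x - y‖ ≤ Nxy x y := by
  have h1 := Nxy_sq x y h0
  have h2 := norm_sub_sq_real x y
  rw [mem_disk] at hx hy
  have a : 0 ≤ 1 - ‖x‖^2 := by nlinarith [norm_nonneg x]
  have b : 0 ≤ 1 - ‖y‖^2 := by nlinarith [norm_nonneg y]
  exact abs_le_of_sq_le_sq' (by nlinarith [mul_nonneg a b]) (Nxy_nonneg x y) |>.2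

lemma greenG_eq (x y : E2) (hx : x ∈ diskD) (hy : y ∈ diskD) (h0 : y ≠ 0) :
    greenG x y = (1/(2*π)) * (Real.log (Nxy x y) - Real.log ‖x - y‖) := by
  have h := Nxy_lower x y hx hy h0
  have h' := prod_lt x y hx hy
  have hN : 0 < Nxy x y := by linarith
  have e : Real.log (Nxy x y) = Real.log ‖y‖ + Real.log ‖x - (‖y‖^2)⁻¹ • y‖ := by
    unfold Nxy at hN ⊢
    refine Real.log_mul (fun hh => ?_) (fun hh => ?_) <;> simp [hh] at hN
  rw [e]; unfold greenG greenh; ring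

lemma greenG_nonneg (x y : E2) (hx : x ∈ diskD) (hy : y ∈ diskD) (h0 : y ≠ 0) (hxy : y ≠ x) :
    0 ≤ greenG x y := by
  rw [greenG_eq x y hx hy h0]
  have : 0 < ‖x - y‖ := norm_pos_iff.mpr (sub_ne_zero.mpr hxy.symm)
  have := Real.log_le_log this (Nxy_ge x y hx hy h0)
  exact mul_nonneg (by positivity) (by linarith)

def phi (z : E2) : ℝ := (Set.Iio (1:ℝ)).indicator (fun r => - Real.log r) ‖z‖

lemma phi_nonneg (z : E2) : 0 ≤ phi z := by
  unfold phi
  refine Set.indicator_apply_nonneg (fun h => ?_)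
  have := Real.log_nonpos (norm_nonneg z) (le_of_lt h)
  linarith

lemma phi_integrable : Integrable phi := by
  unfold phi
  rw [integrable_fun_norm_addHaar (volume : Measure E2) (f := (Set.Iio (1:ℝ)).indicator (fun r => - Real.log r))]
  have e : (fun y : ℝ => y ^ (Module.finrank ℝ E2 - 1) • (Set.Iio (1:ℝ)).indicator (fun r => - Real.log r) y)
      = (Set.Iio (1:ℝ)).indicator (fun r => - (r * Real.log r)) := by
    ext y
    by_cases h : y ∈ Set.Iio (1:ℝ) <;> simp [h]
  rw [e, IntegrableOn, integrable_indicator_iff measurableSet_Iio, IntegrableOn,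
    Measure.restrict_restrict measurableSet_Iio]
  have : IntegrableOn (fun r : ℝ => - (r * Real.log r)) (Set.Icc 0 1) :=
    (Real.continuous_mul_log.neg).continuousOn.integrableOn_Icc
  exact this.mono_set (fun r hr => ⟨le_of_lt hr.2, le_of_lt hr.1⟩)

lemma log_le_phi (e : ℝ) (he : 0 < e) (he1 : e < 1) (z : E2) :
    - Real.log ‖z‖ ≤ - Real.log e + phi (e⁻¹ • z) := by
  have hle : Real.log e ≤ 0 := Real.log_nonpos he.le he1.le
  have hp := phi_nonneg (e⁻¹ • z)
  rcases eq_or_ne z 0 with rfl | hz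
  · simp only [norm_zero, Real.log_zero]; linarith
  have hz' : 0 < ‖z‖ := norm_pos_iff.mpr hz
  have hn : ‖e⁻¹ • z‖ = e⁻¹ * ‖z‖ := by
    rw [norm_smul, Real.norm_of_nonneg (by positivity)]
  by_cases h : ‖e⁻¹ • z‖ < 1
  · have : phi (e⁻¹ • z) = - Real.log (e⁻¹ * ‖z‖) := by
      unfold phi
      rw [Set.indicator_of_mem (show ‖e⁻¹ • z‖ ∈ Set.Iio (1:ℝ) from h), hn]
    rw [this, Real.log_mul (by positivity) hz'.ne', Real.log_inv]
    linarith
  · have h2 : e ≤ ‖z‖ := by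
      rw [hn, not_lt, inv_mul_eq_div, le_div_iff₀ he] at h
      linarith
    have := Real.log_le_log he h2
    linarith

def MM : ℝ := ∫ z, phi z

lemma MM_nonneg : 0 ≤ MM := integral_nonneg phi_nonneg

lemma phi_int (e : ℝ) (he : 0 < e) (x : E2) : Integrable (fun y => phi (e⁻¹ • (x - y))) :=
  (phi_integrable.comp_smul (R := e⁻¹) (by positivity)).comp_sub_left x

lemma phi_integral (e : ℝ) (he : 0 < e) (x : E2) :
    ∫ y in diskD, phi (e⁻¹ • (x - y)) ≤ e^2 * MM := by
  refine (setIntegral_le_integral (phi_int e he x) (ae_of_all _ fun y => phi_nonneg _)).trans ?_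
  rw [integral_sub_left_eq_self (fun y => phi (e⁻¹ • y)) volume x, Measure.integral_comp_inv_smul]
  simp [MM]

lemma greenG_le (e : ℝ) (he : 0 < e) (he1 : e < 1) (x y : E2) (hx : x ∈ diskD) (hy : y ∈ diskD)
    (h0 : y ≠ 0) :
    greenG x y ≤ (1/(2*π)) * (Real.log 2 - Real.log e + phi (e⁻¹ • (x - y))) := by
  rw [greenG_eq x y hx hy h0]
  have h := Nxy_lower x y hx hy h0
  have h' := prod_lt x y hx hy
  have h1 := Real.log_le_log (by linarith) (Nxy_upper x y hx hy h0)
  have h2 := log_le_phi e he he1 (x - y)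
  exact mul_le_mul_of_nonneg_left (by linarith) (by positivity)

lemma measD : MeasurableSet diskD := Metric.isOpen_ball.measurableSet

instance finD : IsFiniteMeasure (volume.restrict diskD) := by
  constructor
  rw [Measure.restrict_apply_univ]
  exact measure_ball_lt_top

lemma ae_good (x : E2) : ∀ᵐ y ∂(volume.restrict diskD), y ∈ diskD ∧ y ≠ 0 ∧ y ≠ x := by
  filter_upwards [ae_restrict_mem measD, ae_restrict_of_ae (Measure.ae_ne volume (0:E2)),
    ae_restrict_of_ae (Measure.ae_ne volume x)] with y a b c
  exact ⟨a, b, c⟩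

def BB (e : ℝ) : ℝ := (1/(2*π)) * (Real.log 2 - Real.log e + MM / π)

lemma w_int (w : E2 → ℝ) (lam : ℝ) (hw : w ∈ Kset lam) : Integrable w (volume.restrict diskD) := by
  refine Integrable.of_integral_ne_zero ?_
  have := hw.2.2
  unfold muD at this
  rw [this]; norm_num

def gbd (lam e : ℝ) (w : E2 → ℝ) (x y : E2) : ℝ :=
  w x * ((1/(2*π)) * ((Real.log 2 - Real.log e) * w y + lam * phi (e⁻¹ • (x - y))))

lemma gbd_int (lam e : ℝ) (he : 0 < e) (w : E2 → ℝ) (hw : w ∈ Kset lam)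
    (x : E2) : Integrable (gbd lam e w x) (volume.restrict diskD) := by
  unfold gbd
  have h1 := w_int w lam hw
  have h2 := (phi_int e he x).restrict (s := diskD)
  exact (((h1.const_mul _).add (h2.const_mul _)).const_mul _).const_mul _

lemma gbd_integral (lam e : ℝ) (he : 0 < e) (hl : lam * e^2 = 1/π) (w : E2 → ℝ) (hw : w ∈ Kset lam)
    (hlam : 0 ≤ lam) (x : E2) (hwx : 0 ≤ w x) :
    ∫ y in diskD, gbd lam e w x y ≤ w x * BB e := by
  unfold gbd BB
  have h1 := w_int w lam hw
  have h2 := (phi_int e he x).restrict (s := diskD)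
  rw [integral_const_mul, integral_const_mul, integral_add (h1.const_mul _) (h2.const_mul _),
    integral_const_mul, integral_const_mul]
  have h3 := hw.2.2
  unfold muD at h3
  rw [h3]
  refine mul_le_mul_of_nonneg_left (mul_le_mul_of_nonneg_left ?_ (by positivity)) hwx
  have h4 := mul_le_mul_of_nonneg_left (phi_integral e he x) hlam
  have h5 : lam * (e^2 * MM) = MM / π := by rw [← mul_assoc, hl]; ring
  linarith

lemma inner_nonneg' (lam : ℝ) (w : E2 → ℝ) (hw : w ∈ Kset lam)
    (x : E2) (hx : x ∈ diskD) (hwx : 0 ≤ w x) :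
    ∀ᵐ y ∂(volume.restrict diskD), 0 ≤ greenG x y * w x * w y := by
  have h := hw.2.1
  unfold muD at h
  filter_upwards [ae_good x, h] with y hy hwy
  exact mul_nonneg (mul_nonneg (greenG_nonneg x y hx hy.1 hy.2.1 hy.2.2) hwx) hwy.1

lemma inner_le' (lam e : ℝ) (he : 0 < e) (he1 : e < 1) (w : E2 → ℝ) (hw : w ∈ Kset lam)
    (x : E2) (hx : x ∈ diskD) (hwx : 0 ≤ w x) :
    ∀ᵐ y ∂(volume.restrict diskD), greenG x y * w x * w y ≤ gbd lam e w x y := by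
  have h := hw.2.1
  unfold muD at h
  filter_upwards [ae_good x, h] with y hy hwy
  have h1 := greenG_le e he he1 x y hx hy.1 hy.2.1
  unfold gbd
  have h2 := mul_le_mul_of_nonneg_right h1 hwy.1
  have h3 := mul_le_mul_of_nonneg_left hwy.2 (phi_nonneg (e⁻¹ • (x - y)))
  have h4 := mul_le_mul_of_nonneg_left h3 (show 0 ≤ 1/(2*π) by positivity)
  have h5 : greenG x y * w y ≤
    (1/(2*π)) * ((Real.log 2 - Real.log e) * w y + lam * phi (e⁻¹ • (x - y))) := by nlinarith
  calc greenG x y * w x * w y = w x * (greenG x y * w y) := by ring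
    _ ≤ _ := mul_le_mul_of_nonneg_left h5 hwx

lemma inner_integral (lam e : ℝ) (he : 0 < e) (he1 : e < 1) (hl : lam * e^2 = 1/π) (w : E2 → ℝ) (hw : w ∈ Kset lam)
    (hlam : 0 ≤ lam) (x : E2) (hx : x ∈ diskD) (hwx : 0 ≤ w x) :
    ∫ y in diskD, greenG x y * w x * w y ≤ w x * BB e :=
  (integral_mono_of_nonneg (inner_nonneg' lam w hw x hx hwx) (gbd_int lam e he w hw x)
    (inner_le' lam e he he1 w hw x hx hwx)).trans (gbd_integral lam e he hl w hw hlam x hwx)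

lemma Efun_le (lam e : ℝ) (he : 0 < e) (he1 : e < 1) (hl : lam * e^2 = 1/π) (w : E2 → ℝ) (hw : w ∈ Kset lam)
    (hlam : 0 ≤ lam) : Efun w ≤ (1/2) * BB e := by
  unfold Efun
  refine mul_le_mul_of_nonneg_left ?_ (by norm_num)
  have h := hw.2.1
  have h3 := hw.2.2
  unfold muD at h h3
  have : ∫ x in diskD, w x * BB e = BB e := by rw [integral_mul_const, h3, one_mul]
  rw [← this]
  refine integral_mono_of_nonneg ?_ ((w_int w lam hw).mul_const _) ?_
  · filter_upwards [ae_restrict_mem measD, h] with x hx hwx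
    exact integral_nonneg_of_ae (inner_nonneg' lam w hw x hx hwx.1)
  · filter_upwards [ae_restrict_mem measD, h] with x hx hwx
    exact inner_integral lam e he he1 hl w hw hlam x hx hwx.1

lemma moment_nonneg (lam : ℝ) (w : E2 → ℝ) (hw : w ∈ Kset lam)
    : 0 ≤ ∫ x in diskD, ‖x‖^2 * w x := by
  have h := hw.2.1
  unfold muD at h
  refine integral_nonneg_of_ae ?_
  filter_upwards [h] with x hwx
  exact mul_nonneg (by positivity) hwx.1

lemma moment_le (lam : ℝ) (w : E2 → ℝ) (hw : w ∈ Kset lam)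
    : ∫ x in diskD, ‖x‖^2 * w x ≤ 1 := by
  have h := hw.2.1
  have h3 := hw.2.2
  unfold muD at h h3
  rw [← h3]
  refine integral_mono_of_nonneg ?_ (w_int w lam hw) ?_
  · filter_upwards [h] with x hwx
    exact mul_nonneg (by positivity) hwx.1
  · filter_upwards [ae_restrict_mem measD, h] with x hx hwx
    rw [mem_disk] at hx
    exact mul_le_of_le_one_left hwx.1 (by nlinarith [norm_nonneg x])

def what (lam e : ℝ) : E2 → ℝ := (Metric.ball (0:E2) e).indicator (fun _ => lam)

lemma what_meas (lam e : ℝ) : Measurable (what lam e) :=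
  measurable_const.indicator Metric.isOpen_ball.measurableSet

lemma what_mem (lam e : ℝ) (he : 0 < e) (he1 : e < 1) (hl : lam * e^2 = 1/π) (hlam : 0 ≤ lam) :
    what lam e ∈ Kset lam := by
  refine ⟨(what_meas lam e).aemeasurable, ae_of_all _ fun x => ?_, ?_⟩
  · by_cases h : x ∈ Metric.ball (0:E2) e
    · simp only [what, Set.indicator_of_mem h]; exact ⟨hlam, le_rfl⟩
    · simp only [what, Set.indicator_of_notMem h]; exact ⟨le_rfl, hlam⟩
  · unfold muD what
    rw [integral_indicator Metric.isOpen_ball.measurableSet,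
      Measure.restrict_restrict Metric.isOpen_ball.measurableSet, diskD,
      Set.inter_eq_left.mpr (Metric.ball_subset_ball he1.le), setIntegral_const, measureReal_def,
      EuclideanSpace.volume_ball_fin_two]
    simp only [ENNReal.toReal_mul, ENNReal.toReal_pow, ENNReal.toReal_ofReal he.le,
      ENNReal.toReal_ofReal Real.pi_pos.le, smul_eq_mul]
    have : e^2 * π * lam = (lam * e^2) * π := by ring
    rw [this, hl]; field_simp

lemma greenG_meas : Measurable (Function.uncurry greenG) := by
  unfold Function.uncurry greenG greenh
  fun_prop

lemma greenG_lower (e : ℝ) (he : 0 < e) (he1 : e < 1) (x y : E2) (hx : ‖x‖ < e) (hy : ‖y‖ < e)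
    (h0 : y ≠ 0) (hxy : y ≠ x) :
    max 0 ((1/(2*π)) * (Real.log (3/8) - Real.log e)) ≤ greenG x y := by
  have hx1 : x ∈ diskD := by rw [mem_disk]; linarith
  have hy1 : y ∈ diskD := by rw [mem_disk]; linarith
  have hG := greenG_nonneg x y hx1 hy1 h0 hxy
  refine max_le hG ?_
  rcases le_or_gt e (3/8) with h | h
  · rw [greenG_eq x y hx1 hy1 h0]
    refine mul_le_mul_of_nonneg_left ?_ (by positivity)
    have a := Nxy_lower x y hx1 hy1 h0
    have b : 3/4 ≤ Nxy x y := by nlinarith [norm_nonneg x, norm_nonneg y]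
    have c := Real.log_le_log (by norm_num) b
    have d : ‖x - y‖ ≤ 2 * e := by linarith [norm_sub_le x y]
    have f : 0 < ‖x - y‖ := norm_pos_iff.mpr (sub_ne_zero.mpr hxy.symm)
    have g := Real.log_le_log f d
    rw [Real.log_mul (by norm_num) he.ne'] at g
    have i : Real.log (3/4) = Real.log (3/8) + Real.log 2 := by
      rw [← Real.log_mul (by norm_num) (by norm_num)]; norm_num
    linarith
  · have := Real.log_le_log (by norm_num) h.le
    refine le_trans (mul_nonpos_of_nonneg_of_nonpos (by positivity) (by linarith)) hG

lemma Efun_what (lam e : ℝ) (he : 0 < e) (he1 : e < 1) (hl : lam * e^2 = 1/π) (hlam : 0 ≤ lam) :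
    (1/2) * max 0 ((1/(2*π)) * (Real.log (3/8) - Real.log e)) ≤ Efun (what lam e) := by
  set c := max 0 ((1/(2*π)) * (Real.log (3/8) - Real.log e)) with hc
  have hc0 : 0 ≤ c := le_max_left _ _
  have hw := what_mem lam e he he1 hl hlam
  have h3 := hw.2.2
  unfold muD at h3
  have hw0 : ∀ x, 0 ≤ what lam e x := fun x => Set.indicator_nonneg (fun _ _ => hlam) x
  have hwl : ∀ x, what lam e x ≤ lam := fun x => Set.indicator_le_self' (fun _ _ => hlam) x
  have hfm : Measurable (Function.uncurry fun x y => greenG x y * what lam e x * what lam e y) :=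
    (greenG_meas.mul ((what_meas lam e).comp measurable_fst)).mul
      ((what_meas lam e).comp measurable_snd)
  unfold Efun
  refine mul_le_mul_of_nonneg_left ?_ (by norm_num)
  have hB : 0 ≤ BB e := by
    unfold BB
    have h1 := Real.log_nonpos he.le he1.le
    have h2 : 0 ≤ Real.log 2 := Real.log_nonneg (by norm_num)
    have h3 : 0 ≤ MM / π := div_nonneg MM_nonneg Real.pi_pos.le
    exact mul_nonneg (by positivity) (by linarith)
  have e1 : ∫ x in diskD, what lam e x * c = c := by rw [integral_mul_const, h3, one_mul]
  rw [← e1]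
  refine integral_mono_of_nonneg (ae_of_all _ fun x => mul_nonneg (hw0 x) hc0) ?_ ?_
  · refine Integrable.of_bound (hfm.stronglyMeasurable.integral_prod_right).aestronglyMeasurable
      (lam * BB e) ?_
    filter_upwards [ae_restrict_mem measD] with x hx
    rw [Real.norm_of_nonneg (integral_nonneg_of_ae (inner_nonneg' lam _ hw x hx (hw0 x)))]
    exact (inner_integral lam e he he1 hl _ hw hlam x hx (hw0 x)).trans
      (mul_le_mul_of_nonneg_right (hwl x) hB)
  · filter_upwards [ae_restrict_mem measD] with x hx
    have e2 : ∫ y in diskD, what lam e x * c * what lam e y = what lam e x * c := by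
      rw [integral_const_mul, h3, mul_one]
    rw [← e2]
    refine integral_mono_of_nonneg
      (ae_of_all _ fun y => mul_nonneg (mul_nonneg (hw0 x) hc0) (hw0 y)) ?_ ?_
    · refine Integrable.mono' (gbd_int lam e he _ hw x)
        (hfm.comp measurable_prodMk_left).aestronglyMeasurable ?_
      filter_upwards [inner_nonneg' lam _ hw x hx (hw0 x),
        inner_le' lam e he he1 _ hw x hx (hw0 x)] with y a b
      rw [Real.norm_of_nonneg a]; exact b
    · filter_upwards [ae_good x] with y hy
      by_cases hxe : x ∈ Metric.ball (0:E2) e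
      · by_cases hye : y ∈ Metric.ball (0:E2) e
        · have := greenG_lower e he he1 x y (by simpa using hxe) (by simpa using hye) hy.2.1 hy.2.2
          have h5 := mul_le_mul_of_nonneg_right this (mul_nonneg (hw0 x) (hw0 y))
          rw [← hc] at h5
          linarith
        · have : what lam e y = 0 := Set.indicator_of_notMem hye _
          simp [this]
      · have : what lam e x = 0 := Set.indicator_of_notMem hxe _
        simp [this]

theorem stmt14 (Ω : ℝ) (hΩ : 0 < Ω) :
    ∃ C : ℝ, 0 < C ∧ ∀ lam : ℝ, 1/π < lam →
      -(1/(4*π)) * Real.log (1/Real.sqrt (π*lam)) - C ≤ sSup (calE Ω '' Kset lam) ∧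
      sSup (calE Ω '' Kset lam) ≤ -(1/(4*π)) * Real.log (1/Real.sqrt (π*lam)) + C := by
  have hM := MM_nonneg
  have hpi := Real.pi_pos
  have hl2 : 0 ≤ Real.log 2 := Real.log_nonneg (by norm_num)
  have hl38 : Real.log (3/8) ≤ 0 := Real.log_nonpos (by norm_num) (by norm_num)
  have hMp : 0 ≤ MM / π := div_nonneg hM hpi.le
  have h4 : 0 < 1/(4*π) := by positivity
  refine ⟨(1/(4*π)) * (Real.log 2 + MM / π - Real.log (3/8)) + Ω/2, ?_, ?_⟩
  · have := mul_nonneg h4.le (show 0 ≤ Real.log 2 + MM / π - Real.log (3/8) by linarith)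
    linarith
  intro lam hlam
  have hlam0 : 0 < lam := lt_trans (by positivity) hlam
  have hpl : 1 < π * lam := by
    rw [div_lt_iff₀ hpi] at hlam; linarith
  set e := 1/Real.sqrt (π*lam) with hedef
  have hs : 1 < Real.sqrt (π*lam) := by
    rw [Real.lt_sqrt (by norm_num)]; linarith
  have he : 0 < e := by positivity
  have he1 : e < 1 := by rw [hedef, div_lt_one (by linarith)]; exact hs
  have hl : lam * e^2 = 1/π := by
    rw [hedef, div_pow, Real.sq_sqrt (by positivity)]; field_simp
  have hup : ∀ w ∈ Kset lam, calE Ω w ≤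
      -(1/(4*π)) * Real.log e + ((1/(4*π)) * (Real.log 2 + MM / π - Real.log (3/8)) + Ω/2) := by
    intro w hw
    have a := Efun_le lam e he he1 hl w hw hlam0.le
    have b := mul_le_mul_of_nonneg_left (moment_le lam w hw) (show 0 ≤ Ω/2 by linarith)
    have c : (1/2) * BB e = (1/(4*π)) * (Real.log 2 - Real.log e + MM / π) := by
      unfold BB; ring
    have d := mul_nonneg h4.le (show 0 ≤ - Real.log (3/8) by linarith)
    unfold calE
    linarith
  have hmem := what_mem lam e he he1 hl hlam0.le
  constructor
  · refine le_trans ?_ (le_csSup ⟨_, Set.forall_mem_image.mpr hup⟩ (Set.mem_image_of_mem _ hmem))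
    have a := Efun_what lam e he he1 hl hlam0.le
    have b := mul_nonneg (show 0 ≤ Ω/2 by linarith) (moment_nonneg lam _ hmem)
    have c := le_max_right 0 ((1/(2*π)) * (Real.log (3/8) - Real.log e))
    have d : (1/2) * ((1/(2*π)) * (Real.log (3/8) - Real.log e))
      = (1/(4*π)) * (Real.log (3/8) - Real.log e) := by ring
    have f := mul_nonneg h4.le (show 0 ≤ Real.log 2 + MM / π by linarith)
    unfold calE
    linarith
  · exact csSup_le ⟨_, Set.mem_image_of_mem _ hmem⟩ (Set.forall_mem_image.mpr hup)
end
end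

section
/- Let R > 1 and 𝒦_R = {ζ ∈ L^∞(B_R(0)) : 0 ≤ ζ ≤ 1 a.e., ∫_{B_R(0)} ζ = π}, and F(ζ) = (1/4π)∫∫_{B_R(0)×B_R(0)} (1/2π)ln|x-y|^{-1} ζ(x)ζ(y) dx dy. Then ζ* = 1_{B_1(0)} is the unique maximizer of F over the set of ζ ∈ 𝒦_R satisfying the centering condition ∫_{B_R(0)} x ζ(x) dx = 0. -/
open MeasureTheory Real Set Filter Topology ENNReal
noncomputable section
/-- The admissible class 𝒦_R of Turkington's lemma. -/
def TK (R : ℝ) : Set (E2 → ℝ) :=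
  {ζ | AEMeasurable ζ (volume.restrict (Metric.ball (0:E2) R)) ∧
    (∀ᵐ x ∂(volume.restrict (Metric.ball (0:E2) R)), 0 ≤ ζ x ∧ ζ x ≤ 1) ∧
    (∫ x in Metric.ball (0:E2) R, ζ x) = π}
/-- The logarithmic interaction energy F. -/
def TF (R : ℝ) (ζ : E2 → ℝ) : ℝ :=
  (1/(4*π)) * ∫ x in Metric.ball (0:E2) R, ∫ y in Metric.ball (0:E2) R,
    ((1/(2*π)) * Real.log (‖x - y‖⁻¹)) * ζ x * ζ y

namespace Turk

/-- Bounded measurable functions with bounded support. -/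
def Nice (f : ℂ → ℝ) : Prop :=
  Measurable f ∧ ∃ C : ℝ, ∀ x, |f x| ≤ C ∧ (C < ‖x‖ → f x = 0)

lemma Nice.mk' {f : ℂ → ℝ} (hf : Measurable f) (A B : ℝ) (h1 : ∀ x, |f x| ≤ A)
    (h2 : ∀ x, B < ‖x‖ → f x = 0) : Nice f :=
  ⟨hf, max A B, fun x => ⟨(h1 x).trans (le_max_left _ _),
    fun h => h2 x (lt_of_le_of_lt (le_max_right _ _) h)⟩⟩

lemma Nice.exists_pos {f : ℂ → ℝ} (hf : Nice f) :
    ∃ C : ℝ, 0 < C ∧ (∀ x, |f x| ≤ C) ∧ ∀ x, C < ‖x‖ → f x = 0 := by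
  obtain ⟨hm, C, hC⟩ := hf
  refine ⟨C + 1, ?_, fun x => ?_, fun x hx => ?_⟩
  · have := (abs_nonneg _).trans (hC 0).1
    linarith
  · linarith [(hC x).1]
  · exact (hC x).2 (by linarith)

lemma Nice.mul_bdd {f : ℂ → ℝ} (hf : Nice f) {g : ℂ → ℝ} (hg : Measurable g)
    (hb : ∀ M : ℝ, ∃ C, ∀ x, ‖x‖ ≤ M → |g x| ≤ C) : Nice (fun x => g x * f x) := by
  obtain ⟨C, hC0, h1, h2⟩ := hf.exists_pos
  obtain ⟨D, hD⟩ := hb C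
  refine Nice.mk' (hg.mul hf.1) (D * C) C (fun x => ?_) (fun x hx => by simp [h2 x hx])
  have hD0 : 0 ≤ D := (abs_nonneg _).trans (hD 0 (by simpa using hC0.le))
  by_cases hx : C < ‖x‖
  · simp [h2 x hx]; positivity
  · rw [abs_mul]
    exact mul_le_mul (hD x (not_lt.mp hx)) (h1 x) (abs_nonneg _) hD0

lemma Nice.add {f g : ℂ → ℝ} (hf : Nice f) (hg : Nice g) : Nice (fun x => f x + g x) := by
  obtain ⟨C, hC0, h1, h2⟩ := hf.exists_pos
  obtain ⟨D, hD0, h3, h4⟩ := hg.exists_pos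
  refine Nice.mk' (hf.1.add hg.1) (C + D) (C + D) (fun x => ?_) (fun x hx => ?_)
  · exact (abs_add_le _ _).trans (add_le_add (h1 x) (h3 x))
  · simp [h2 x (by linarith), h4 x (by linarith)]

lemma Nice.const_mul {f : ℂ → ℝ} (hf : Nice f) (c : ℝ) : Nice (fun x => c * f x) :=
  hf.mul_bdd measurable_const (fun _ => ⟨|c|, fun _ _ => le_rfl⟩)

lemma Nice.sub {f g : ℂ → ℝ} (hf : Nice f) (hg : Nice g) : Nice (fun x => f x - g x) := by
  have := hf.add (hg.const_mul (-1))
  simpa [sub_eq_add_neg] using this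

lemma Nice.abs {f : ℂ → ℝ} (hf : Nice f) : Nice (fun x => |f x|) := by
  obtain ⟨C, hC0, h1, h2⟩ := hf.exists_pos
  exact Nice.mk' (by have := hf.1; fun_prop) C C (by simpa using h1) (by simpa using h2)

lemma Nice.eq_indicator {f : ℂ → ℝ} {C : ℝ} (h2 : ∀ x, C < ‖x‖ → f x = 0) :
    f = (Metric.closedBall (0:ℂ) C).indicator f := by
  funext x
  by_cases hx : x ∈ Metric.closedBall (0:ℂ) C
  · simp [hx]
  · rw [indicator_of_notMem hx]
    apply h2
    simpa using hx

lemma Nice.memLp {f : ℂ → ℝ} (hf : Nice f) (p : ℝ≥0∞) : MemLp f p volume := by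
  obtain ⟨C, hC0, h1, h2⟩ := hf.exists_pos
  rw [Nice.eq_indicator h2, memLp_indicator_iff_restrict measurableSet_closedBall]
  have : IsFiniteMeasure (volume.restrict (Metric.closedBall (0:ℂ) C)) :=
    ⟨by rw [Measure.restrict_apply_univ]; exact measure_closedBall_lt_top⟩
  exact MemLp.of_bound hf.1.aestronglyMeasurable C (Eventually.of_forall (by simpa using h1))

lemma Nice.integrable {f : ℂ → ℝ} (hf : Nice f) : Integrable f :=
  memLp_one_iff_integrable.mp (hf.memLp 1)

lemma meas_log : Measurable (fun z : ℂ => log ‖z‖) := measurable_norm.log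

lemma log_memLp (M : ℝ) :
    MemLp (fun z : ℂ => log ‖z‖) 2 (volume.restrict (Metric.ball (0:ℂ) M)) := by
  rw [memLp_two_iff_integrable_sq meas_log.aestronglyMeasurable]
  have := (integrableOn_fun_norm_addHaar (volume : Measure ℂ) (f := fun r => (log r)^2) (r := M)).mpr ?_
  · exact this
  · have hc : Continuous (fun y : ℝ => 4 * (√y * log √y)^2) := by
      have := Real.continuous_mul_log.comp Real.continuous_sqrt
      exact continuous_const.mul (this.pow 2)
    have h1 : IntegrableOn (fun y : ℝ => 4 * (√y * log √y)^2) (Ioo 0 M) :=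
      (hc.continuousOn.integrableOn_Icc).mono_set Ioo_subset_Icc_self
    refine h1.congr_fun (fun y hy => ?_) measurableSet_Ioo
    have hy0 : 0 < y := hy.1
    simp only [Complex.finrank_real_complex, Nat.add_one_sub_one, pow_one, smul_eq_mul]
    rw [Real.log_sqrt hy0.le, mul_pow, Real.sq_sqrt hy0.le]
    ring

/-- truncated log kernel -/
def kap (M : ℝ) (z : ℂ) : ℝ := (Metric.ball (0:ℂ) M).indicator (fun z : ℂ => log ‖z‖) z

lemma kap_meas (M : ℝ) : Measurable (kap M) := meas_log.indicator measurableSet_ball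

lemma kap_memLp (M : ℝ) : MemLp (kap M) 2 volume :=
  (memLp_indicator_iff_restrict measurableSet_ball).mpr (log_memLp M)

lemma kap_int (M : ℝ) : Integrable (kap M) := by
  apply (integrable_indicator_iff measurableSet_ball).mpr
  have : IsFiniteMeasure (volume.restrict (Metric.ball (0:ℂ) M)) :=
    ⟨by rw [Measure.restrict_apply_univ]; exact measure_ball_lt_top⟩
  exact memLp_one_iff_integrable.mp ((log_memLp M).mono_exponent (by norm_num))

lemma kap_eq {M : ℝ} {z : ℂ} (h : ‖z‖ < M) : kap M z = log ‖z‖ := by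
  simp [kap, h]

lemma log_mul_eq {g : ℂ → ℝ} {C M : ℝ} (h2 : ∀ x, C < ‖x‖ → g x = 0) {x : ℂ} (hx : ‖x‖ < M) (y : ℂ) :
    log ‖x - y‖ * g y = kap (M + C) (x - y) * g y := by
  by_cases hy : C < ‖y‖
  · simp [h2 y hy]
  · rw [kap_eq]
    calc ‖x - y‖ ≤ ‖x‖ + ‖y‖ := norm_sub_le _ _
      _ < M + C := by linarith [not_lt.mp hy]

lemma Nice.log_memLp {g : ℂ → ℝ} (hg : Nice g) (x : ℂ) :
    MemLp (fun y => log ‖x - y‖ * g y) 2 volume := by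
  obtain ⟨C, hC0, h1, h2⟩ := hg.exists_pos
  have : (fun y => log ‖x - y‖ * g y) = fun y => kap (‖x‖ + 1 + C) (x - y) * g y := by
    funext y
    exact log_mul_eq h2 (by linarith) y
  rw [this]
  have hk : MemLp (fun y => kap (‖x‖ + 1 + C) (x - y)) 2 volume :=
    (kap_memLp _).comp_measurePreserving (Measure.measurePreserving_sub_left volume x)
  exact (hg.memLp ∞).mul hk

lemma kap_sub_int (M : ℝ) (x : ℂ) : Integrable (fun y => kap M (x - y)) :=
  (Measure.measurePreserving_sub_left volume x).integrable_comp_of_integrable (kap_int M)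

lemma Nice.log_int {g : ℂ → ℝ} (hg : Nice g) (x : ℂ) :
    Integrable (fun y => log ‖x - y‖ * g y) := by
  obtain ⟨C, hC0, h1, h2⟩ := hg.exists_pos
  have : (fun y => log ‖x - y‖ * g y) = fun y => kap (‖x‖ + 1 + C) (x - y) * g y := by
    funext y
    exact log_mul_eq h2 (by linarith) y
  rw [this]
  exact (kap_sub_int _ x).mul_bdd (c := C) hg.1.aestronglyMeasurable (Eventually.of_forall (by simpa using h1))

lemma unif_bound (A M : ℝ) : ∃ D : ℝ, ∀ g : ℂ → ℝ, Measurable g → (∀ x, |g x| ≤ A) →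
    (∀ x, A < ‖x‖ → g x = 0) → ∀ x : ℂ, ‖x‖ ≤ M →
      ∫ y, |log ‖x - y‖ * g y| ≤ D := by
  refine ⟨∫ y, |kap (M + 1 + A) y| * A, fun g hgm h1 h2 x hx => ?_⟩
  have e : (fun y => |log ‖x - y‖ * g y|) = fun y => |kap (M + 1 + A) (x - y)| * |g y| := by
    funext y
    rw [log_mul_eq h2 (M := M + 1) (by linarith) y, abs_mul]
  rw [e, ← (Measure.measurePreserving_sub_left volume x).integral_comp (Homeomorph.subLeft x).measurableEmbedding]
  apply integral_mono_of_nonneg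
  · exact Eventually.of_forall (fun y => by positivity)
  · exact ((kap_int _).abs).mul_const _
  · refine Eventually.of_forall (fun y => ?_)
    have e : x - (x - y) = y := by ring
    simp only [e]
    exact mul_le_mul_of_nonneg_left (h1 _) (abs_nonneg _)

lemma int2 {f g : ℂ → ℝ} (hf : Nice f) (hg : Nice g) :
    Integrable (fun z : ℂ × ℂ => log ‖z.1 - z.2‖ * (f z.1 * g z.2)) (volume.prod volume) := by
  obtain ⟨C, hC0, h1, h2⟩ := hg.exists_pos
  obtain ⟨D, hD0, h3, h4⟩ := hf.exists_pos
  have e : (fun z : ℂ × ℂ => log ‖z.1 - z.2‖ * (f z.1 * g z.2)) =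
      fun z => (ContinuousLinearMap.mul ℝ ℝ (g z.2) (kap (D + 1 + C) (z.1 - z.2))) * f z.1 := by
    funext z
    by_cases hz : D < ‖z.1‖
    · simp [h4 _ hz]
    · have := log_mul_eq h2 (M := D + 1) (x := z.1) (by linarith [not_lt.mp hz]) z.2
      simp only [ContinuousLinearMap.mul_apply']
      linear_combination f z.1 * this
  rw [e]
  refine Integrable.mul_bdd (c := D) (hg.integrable.convolution_integrand _ (kap_int (D + 1 + C))) ?_ ?_
  · exact (hf.1.comp measurable_fst).aestronglyMeasurable
  · exact Eventually.of_forall (fun z => by simpa using h3 z.1)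

/-- the bilinear log energy -/
def En (f g : ℂ → ℝ) : ℝ := ∫ z : ℂ × ℂ, log ‖z.1 - z.2‖ * (f z.1 * g z.2) ∂(volume.prod volume)

/-- the log potential -/
def pot (g : ℂ → ℝ) (x : ℂ) : ℝ := ∫ y, log ‖x - y‖ * g y

lemma En_eq_pot {f g : ℂ → ℝ} (hf : Nice f) (hg : Nice g) : En f g = ∫ x, f x * pot g x := by
  rw [En, integral_prod _ (int2 hf hg)]
  congr 1; funext x
  rw [pot, ← integral_const_mul]
  congr 1; funext y
  ring

lemma En_add {f g h k : ℂ → ℝ} (hf : Nice f) (hg : Nice g) (hh : Nice h) (hk : Nice k) :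
    En (fun x => f x + g x) (fun x => h x + k x) = En f h + En f k + En g h + En g k := by
  unfold En
  rw [← integral_add (int2 hf hh) (int2 hf hk), ← integral_add _ (int2 hg hh), ← integral_add _ (int2 hg hk)]
  · congr 1; funext z; ring
  · exact ((int2 hf hh).add (int2 hf hk)).add (int2 hg hh)
  · exact ((int2 hf hh).add (int2 hf hk))

lemma En_comm (f g : ℂ → ℝ) : En f g = En g f := by
  unfold En
  rw [← integral_prod_swap]
  congr 1; funext z
  simp only [Prod.fst_swap, Prod.snd_swap]
  rw [norm_sub_rev, mul_comm (f _)]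

lemma En_congr {f g f' g' : ℂ → ℝ} (h : f =ᵐ[volume] f') (h' : g =ᵐ[volume] g') :
    En f g = En f' g' := by
  unfold En
  apply integral_congr_ae
  have a1 := (Measure.quasiMeasurePreserving_fst (μ := (volume : Measure ℂ)) (ν := (volume : Measure ℂ))).ae h
  have a2 := (Measure.quasiMeasurePreserving_snd (μ := (volume : Measure ℂ)) (ν := (volume : Measure ℂ))).ae h'
  filter_upwards [a1, a2] with z h1 h2
  rw [h1, h2]

end Turk


namespace Turk

/-- signed distance to the line through `p` orthogonal to `n` -/
def tt (p n x : ℂ) : ℝ := inner ℝ n (x - p)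

/-- reflection in the line through `p` orthogonal to `n` -/
def sig (p n x : ℂ) : ℂ := p - (Submodule.span ℝ {n}).reflection (x - p)

lemma sig_eq {p n : ℂ} (hn : ‖n‖ = 1) (x : ℂ) : sig p n x = x - (2 * tt p n x) • n := by
  unfold sig tt
  rw [Submodule.reflection_singleton_apply]
  simp only [hn, Complex.real_smul]
  norm_num
  ring

lemma sig_mp (p n : ℂ) : MeasurePreserving (sig p n) volume volume := by
  have h1 := (Submodule.span ℝ {n}).reflection.measurePreserving
  exact (Measure.measurePreserving_sub_left volume p).comp (h1.comp (measurePreserving_sub_right volume p))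

lemma sig_sig (p n x : ℂ) : sig p n (sig p n x) = x := by
  unfold sig
  have : p - (Submodule.span ℝ {n}).reflection (x - p) - p = - (Submodule.span ℝ {n}).reflection (x - p) := by ring
  rw [this, map_neg, Submodule.reflection_reflection]
  ring

lemma norm_sig_sub (p n x y : ℂ) : ‖sig p n x - sig p n y‖ = ‖x - y‖ := by
  unfold sig
  have : p - (Submodule.span ℝ {n}).reflection (x - p) - (p - (Submodule.span ℝ {n}).reflection (y - p))
    = (Submodule.span ℝ {n}).reflection (y - x) := by
    have : y - x = (y - p) - (x - p) := by ring
    rw [this, map_sub (Submodule.span ℝ {n}).reflection (y - p) (x - p)]; ring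
  rw [this, LinearIsometryEquiv.norm_map, norm_sub_rev]

lemma tt_sig {p n : ℂ} (hn : ‖n‖ = 1) (x : ℂ) : tt p n (sig p n x) = - tt p n x := by
  rw [sig_eq hn]
  have : x - (2 * tt p n x) • n - p = (x - p) - (2 * tt p n x) • n := by ring
  unfold tt at *
  rw [this, inner_sub_right, inner_smul_right, real_inner_self_eq_norm_sq, hn]
  ring

lemma tt_sub (p n x y : ℂ) : inner ℝ n (x - y) = tt p n x - tt p n y := by
  unfold tt
  rw [← inner_sub_right]; congr 1; ring

lemma norm_sub_sig {p n : ℂ} (hn : ‖n‖ = 1) (x y : ℂ) :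
    ‖x - sig p n y‖ ^ 2 = ‖x - y‖ ^ 2 + 4 * tt p n x * tt p n y := by
  rw [sig_eq hn]
  have : x - (y - (2 * tt p n y) • n) = (x - y) + (2 * tt p n y) • n := by ring
  rw [this, norm_add_sq_real, inner_smul_right, real_inner_comm, tt_sub p, norm_smul, hn, mul_one,
    Real.norm_eq_abs, sq_abs]
  ring

lemma norm_sig {p n : ℂ} (hn : ‖n‖ = 1) (x : ℂ) :
    ‖sig p n x‖ ^ 2 = ‖x‖ ^ 2 - 4 * tt p n x * inner ℝ n p := by
  have h := tt_sub p n x 0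
  rw [sig_eq hn, norm_sub_sq_real, inner_smul_right, real_inner_comm, norm_smul, hn, mul_one,
    Real.norm_eq_abs, sq_abs]
  have h2 : inner ℝ n x = tt p n x + inner ℝ n p := by
    unfold tt; rw [inner_sub_right]; ring
  rw [h2]
  ring

lemma sig_of_tt {p n : ℂ} (hn : ‖n‖ = 1) {x : ℂ} (h : tt p n x = 0) : sig p n x = x := by
  rw [sig_eq hn, h]; simp

lemma tt_meas (p n : ℂ) : Measurable (tt p n) := by
  unfold tt
  have : Continuous (fun x : ℂ => inner ℝ n (x - p)) := by fun_prop
  exact this.measurable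

lemma tt_bdd (p n : ℂ) (M : ℝ) : ∃ C, ∀ x : ℂ, ‖x‖ ≤ M → |tt p n x| ≤ C := by
  refine ⟨‖n‖ * (M + ‖p‖), fun x hx => ?_⟩
  refine (abs_real_inner_le_norm _ _).trans ?_
  gcongr
  exact (norm_sub_le _ _).trans (by linarith)

/-- reflection as a measurable equivalence -/
def sigE (p n : ℂ) : ℂ ≃ᵐ ℂ where
  toFun := sig p n
  invFun := sig p n
  left_inv := sig_sig p n
  right_inv := sig_sig p n
  measurable_toFun := (sig_mp p n).measurable
  measurable_invFun := (sig_mp p n).measurable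

lemma integral_sig (p n : ℂ) (f : ℂ → ℝ) : ∫ x, f (sig p n x) = ∫ x, f x :=
  MeasurePreserving.integral_comp' (f := sigE p n) (sig_mp p n) f

lemma Nice.sig {f : ℂ → ℝ} (hf : Nice f) (p n : ℂ) : Nice (fun x => f (sig p n x)) := by
  obtain ⟨C, hC0, h1, h2⟩ := hf.exists_pos
  refine Nice.mk' (hf.1.comp (sig_mp p n).measurable) C (C + ‖Turk.sig p n 0‖) (fun x => h1 _) (fun x hx => h2 _ ?_)
  have h3 := norm_sig_sub p n x 0
  have := norm_sub_le (Turk.sig p n x) (Turk.sig p n 0)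
  rw [h3, sub_zero] at this
  linarith

lemma integral2_sig (p n : ℂ) (F : ℂ × ℂ → ℝ) :
    ∫ z, F (sig p n z.1, sig p n z.2) ∂((volume : Measure ℂ).prod volume) =
      ∫ z, F z ∂((volume : Measure ℂ).prod volume) :=
  MeasurePreserving.integral_comp' (f := (sigE p n).prodCongr (sigE p n)) ((sig_mp p n).prod (sig_mp p n)) F

lemma mp_right (p n : ℂ) : MeasurePreserving (fun z : ℂ × ℂ => (z.1, sig p n z.2))
    ((volume : Measure ℂ).prod volume) ((volume : Measure ℂ).prod volume) :=
  (MeasurePreserving.id volume).prod (sig_mp p n)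

lemma integral2_sig_right (p n : ℂ) (F : ℂ × ℂ → ℝ) :
    ∫ z, F (z.1, sig p n z.2) ∂((volume : Measure ℂ).prod volume) =
      ∫ z, F z ∂((volume : Measure ℂ).prod volume) :=
  MeasurePreserving.integral_comp' (f := (MeasurableEquiv.refl ℂ).prodCongr (sigE p n)) (mp_right p n) F

lemma En_sig (p n : ℂ) (f g : ℂ → ℝ) :
    En (fun x => f (sig p n x)) (fun x => g (sig p n x)) = En f g := by
  unfold En
  rw [← integral2_sig p n]
  simp only [norm_sig_sub, sig_sig]

/-- even and odd functions are orthogonal for the energy -/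
lemma En_even_odd {p n : ℂ} {s a : ℂ → ℝ} (hs : ∀ x, s (sig p n x) = s x)
    (ha : ∀ x, a (sig p n x) = - a x) : En s a = 0 := by
  have h := En_sig p n s a
  have e : En (fun x => s (sig p n x)) (fun x => a (sig p n x)) = - En s a := by
    simp only [hs, ha]
    unfold En
    rw [← integral_neg]
    congr 1; funext z; ring
  linarith

lemma int2_sig {f g : ℂ → ℝ} (hf : Nice f) (hg : Nice g) (p n : ℂ) :
    Integrable (fun z : ℂ × ℂ => log ‖z.1 - sig p n z.2‖ * (f z.1 * g z.2)) (volume.prod volume) := by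
  have := (mp_right p n).integrable_comp_of_integrable (int2 hf (hg.sig p n))
  refine this.congr (Eventually.of_forall fun z => ?_)
  simp [sig_sig]

lemma En_odd {p n : ℂ} {a : ℂ → ℝ} (hN : Nice a) (ha : ∀ x, a (sig p n x) = - a x) :
    2 * En a a = - ∫ z : ℂ × ℂ, (log ‖z.1 - sig p n z.2‖ - log ‖z.1 - z.2‖) * (a z.1 * a z.2)
      ∂(volume.prod volume) := by
  have h1 : En a a = - ∫ z : ℂ × ℂ, log ‖z.1 - sig p n z.2‖ * (a z.1 * a z.2) ∂(volume.prod volume) := by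
    unfold En
    rw [← integral2_sig_right p n, ← integral_neg]
    congr 1; funext z
    simp only [ha]; ring
  have h2 : ∫ z : ℂ × ℂ, (log ‖z.1 - sig p n z.2‖ - log ‖z.1 - z.2‖) * (a z.1 * a z.2)
      ∂(volume.prod volume) = (∫ z : ℂ × ℂ, log ‖z.1 - sig p n z.2‖ * (a z.1 * a z.2) ∂(volume.prod volume)) - En a a := by
    unfold En
    rw [← integral_sub (int2_sig hN hN p n) (int2 hN hN)]
    congr 1; funext z; ring
  rw [h2]; linarith

lemma ae_ne : ∀ᵐ z ∂((volume : Measure ℂ).prod volume), z.1 ≠ z.2 := by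
  rw [ae_iff]
  have hm : MeasurableSet {z : ℂ × ℂ | ¬ (z.1 ≠ z.2)} := by
    simp only [ne_eq, not_not]
    exact measurableSet_eq_fun measurable_fst measurable_snd
  rw [Measure.measure_prod_null hm]
  refine Eventually.of_forall fun x => ?_
  have : (Prod.mk x ⁻¹' {z : ℂ × ℂ | ¬ (z.1 ≠ z.2)}) = {x} := by
    ext y; simp [eq_comm]
  simp

lemma ae_ne_sig (p n : ℂ) : ∀ᵐ z ∂((volume : Measure ℂ).prod volume), z.1 ≠ sig p n z.2 :=
  (mp_right p n).quasiMeasurePreserving.ae ae_ne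

/-- the admissible class -/
structure KK (R : ℝ) (ζ : ℂ → ℝ) : Prop where
  meas : Measurable ζ
  nn : ∀ x, 0 ≤ ζ x
  le : ∀ x, ζ x ≤ 1
  supp : ∀ x, R ≤ ‖x‖ → ζ x = 0
  mass : ∫ x, ζ x = π

lemma KK.nice {R : ℝ} {ζ : ℂ → ℝ} (h : KK R ζ) : Nice ζ :=
  Nice.mk' h.meas 1 R (fun x => by rw [abs_of_nonneg (h.nn x)]; exact h.le x) (fun x hx => h.supp x hx.le)

/-- the sign of L -/
lemma L_sign {p n : ℂ} (hn : ‖n‖ = 1) {x y : ℂ} (h1 : x ≠ y) (h2 : x ≠ sig p n y) :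
    (0 < tt p n x * tt p n y → 0 < log ‖x - sig p n y‖ - log ‖x - y‖) ∧
    (tt p n x * tt p n y < 0 → log ‖x - sig p n y‖ - log ‖x - y‖ < 0) := by
  have a1 : 0 < ‖x - y‖ := norm_pos_iff.mpr (sub_ne_zero.mpr h1)
  have a2 : 0 < ‖x - sig p n y‖ := norm_pos_iff.mpr (sub_ne_zero.mpr h2)
  have k := norm_sub_sig (p := p) hn x y
  constructor
  · intro h
    have : ‖x - y‖ < ‖x - sig p n y‖ := by
      apply lt_of_pow_lt_pow_left₀ 2 a2.le; linarith
    linarith [Real.log_lt_log a1 this]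
  · intro h
    have : ‖x - sig p n y‖ < ‖x - y‖ := by
      apply lt_of_pow_lt_pow_left₀ 2 a1.le; linarith
    linarith [Real.log_lt_log a2 this]

/-- Real sign algebra behind polarization. -/
lemma pol_alg (L s t a b : ℝ) (hp : 0 < s * t → 0 < L) (hm : s * t < 0 → L < 0) :
    0 ≤ L * ((SignType.sign s * |a|) * (SignType.sign t * |b|)) - L * (a * b) + (if s * t = 0 then L * (a*b) else 0) ∧
    (L * ((SignType.sign s * |a|) * (SignType.sign t * |b|)) - L * (a * b) = 0 →
      |s * a| * |t * b| = (s * a) * (t * b)) := by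
  have key : ((SignType.sign s : ℝ) * |a|) * ((SignType.sign t : ℝ) * |b|) = (SignType.sign (s * t) : ℝ) * |a * b| := by
    rw [sign_mul, abs_mul]; push_cast; ring
  rw [key, ← abs_mul]
  have e : s * a * (t * b) = (s * t) * (a * b) := by ring
  rw [e, abs_mul (s*t)]
  generalize s * t = u at *
  generalize a * b = v at *
  rcases lt_trichotomy u 0 with h | h | h
  · have hL := hm h
    simp only [sign_neg h, h.ne, if_false, abs_of_neg h]
    refine ⟨?_, fun h0 => ?_⟩
    · simp; nlinarith [neg_abs_le v, le_abs_self v]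
    · have : L * (-|v| - v) = 0 := by simp at h0; linarith
      rcases mul_eq_zero.mp this with h3 | h3
      · linarith
      · have : |v| = -v := by linarith
        rw [this]; ring
  · subst h; simp
  · have hL := hp h
    simp only [sign_pos h, h.ne', if_false, abs_of_pos h]
    refine ⟨?_, fun h0 => ?_⟩
    · simp; nlinarith [neg_abs_le v, le_abs_self v]
    · have : L * (|v| - v) = 0 := by simp at h0; linarith
      rcases mul_eq_zero.mp this with h3 | h3
      · linarith
      · have : |v| = v := by linarith
        rw [this]

end Turk


namespace Turk

/-- signed absolute value of the odd part -/
def sab (p n : ℂ) (a : ℂ → ℝ) (x : ℂ) : ℝ := (SignType.sign (tt p n x) : ℝ) * |a x|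

lemma sab_nice {a : ℂ → ℝ} (ha : Nice a) (p n : ℂ) : Nice (sab p n a) := by
  refine Nice.mul_bdd ha.abs ?_ (fun M => ⟨1, fun x _ => ?_⟩)
  · have h1 : Measurable (fun r : ℝ => (SignType.sign r : ℝ)) := by
      have : (fun r : ℝ => (SignType.sign r : ℝ)) = fun r => if 0 < r then 1 else if r < 0 then -1 else 0 := by
        funext r
        rcases lt_trichotomy r 0 with h | h | h
        · simp [sign_neg h, h, h.le.not_gt]
        · simp [h]
        · simp [sign_pos h, h]
      rw [this]
      exact Measurable.ite measurableSet_Ioi measurable_const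
        (Measurable.ite measurableSet_Iio measurable_const measurable_const)
    exact h1.comp (tt_meas p n)
  · rcases lt_trichotomy (tt p n x) 0 with h | h | h
    · simp [sign_neg h]
    · simp [h]
    · simp [sign_pos h]

lemma sab_odd {p n : ℂ} (hn : ‖n‖ = 1) {a : ℂ → ℝ} (ha : ∀ x, a (sig p n x) = - a x) (x : ℂ) :
    sab p n a (sig p n x) = - sab p n a x := by
  unfold sab
  rw [tt_sig hn, ha, abs_neg, Left.sign_neg]
  push_cast; ring

lemma odd_integral {p n : ℂ} {a : ℂ → ℝ} (ha : ∀ x, a (sig p n x) = - a x) : ∫ x, a x = 0 := by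
  have := integral_sig p n a
  simp only [ha, integral_neg] at this
  linarith

/-- polarization -/
def pol (p n : ℂ) (ζ : ℂ → ℝ) (x : ℂ) : ℝ :=
  (1/2) * (ζ x + ζ (sig p n x)) + sab p n (fun x => (1/2) * (ζ x - ζ (sig p n x))) x

lemma pol_pos {p n : ℂ} (ζ : ℂ → ℝ) {x : ℂ} (h : 0 < tt p n x) :
    pol p n ζ x = max (ζ x) (ζ (sig p n x)) := by
  simp only [pol, sab, sign_pos h]
  rw [abs_mul, abs_of_pos (by norm_num : (0:ℝ) < 1/2)]
  rcases le_total (ζ x) (ζ (sig p n x)) with h1 | h1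
  · rw [max_eq_right h1, abs_of_nonpos (by linarith)]; simp; ring
  · rw [max_eq_left h1, abs_of_nonneg (by linarith)]; simp; ring

lemma pol_neg {p n : ℂ} (ζ : ℂ → ℝ) {x : ℂ} (h : tt p n x < 0) :
    pol p n ζ x = min (ζ x) (ζ (sig p n x)) := by
  simp only [pol, sab, sign_neg h]
  rw [abs_mul, abs_of_pos (by norm_num : (0:ℝ) < 1/2)]
  rcases le_total (ζ x) (ζ (sig p n x)) with h1 | h1
  · rw [min_eq_left h1, abs_of_nonpos (by linarith)]; simp; ring
  · rw [min_eq_right h1, abs_of_nonneg (by linarith)]; simp; ring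

lemma pol_zero {p n : ℂ} (hn : ‖n‖ = 1) (ζ : ℂ → ℝ) {x : ℂ} (h : tt p n x = 0) :
    pol p n ζ x = ζ x := by
  simp only [pol, sab, h, sig_of_tt hn h]
  simp; ring

lemma pol_KK {R : ℝ} {p n : ℂ} (hn : ‖n‖ = 1) (hp : inner ℝ n p ≤ 0) {ζ : ℂ → ℝ} (h : KK R ζ) :
    KK R (pol p n ζ) := by
  have hN := h.nice
  have hNs := h.nice.sig p n
  have hS : Nice (fun x => (1/2) * (ζ x + ζ (sig p n x))) := (hN.add hNs).const_mul _
  have hA : Nice (fun x => (1/2) * (ζ x - ζ (sig p n x))) := (hN.sub hNs).const_mul _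
  have hA' := sab_nice hA p n
  refine ⟨(hS.add hA').1, fun x => ?_, fun x => ?_, fun x hx => ?_, ?_⟩
  · rcases lt_trichotomy (tt p n x) 0 with h1 | h1 | h1
    · rw [pol_neg ζ h1]; exact le_min (h.nn _) (h.nn _)
    · rw [pol_zero hn ζ h1]; exact h.nn _
    · rw [pol_pos ζ h1]; exact le_max_of_le_left (h.nn _)
  · rcases lt_trichotomy (tt p n x) 0 with h1 | h1 | h1
    · rw [pol_neg ζ h1]; exact min_le_of_left_le (h.le _)
    · rw [pol_zero hn ζ h1]; exact h.le _
    · rw [pol_pos ζ h1]; exact max_le (h.le _) (h.le _)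
  · rcases lt_trichotomy (tt p n x) 0 with h1 | h1 | h1
    · rw [pol_neg ζ h1, h.supp x hx]; exact min_eq_left (h.nn _)
    · rw [pol_zero hn ζ h1]; exact h.supp x hx
    · rw [pol_pos ζ h1, h.supp x hx, h.supp, max_self]
      refine hx.trans ?_
      apply le_of_sq_le_sq _ (norm_nonneg _)
      have := norm_sig (p := p) hn x
      nlinarith
  · unfold pol
    rw [integral_add hS.integrable hA'.integrable, integral_const_mul,
      integral_add hN.integrable hNs.integrable, integral_sig, h.mass,
      odd_integral (p := p) (n := n) (sab_odd hn ?_)]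
    · ring
    · intro x; rw [sig_sig]; ring

lemma symm_of_min {R : ℝ} {ζ : ℂ → ℝ} (h : KK R ζ) (hmin : ∀ η, KK R η → En ζ ζ ≤ En η η)
    {p n : ℂ} (hn : ‖n‖ = 1) (hp : inner ℝ n p ≤ 0) (hb : ∫ x, tt p n x * ζ x = 0) :
    (fun x => ζ (sig p n x)) =ᵐ[volume] ζ := by
  have hN := h.nice
  have hNs := h.nice.sig p n
  set s : ℂ → ℝ := fun x => (1/2) * (ζ x + ζ (sig p n x)) with hs
  set a : ℂ → ℝ := fun x => (1/2) * (ζ x - ζ (sig p n x)) with ha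
  have hS : Nice s := (hN.add hNs).const_mul _
  have hA : Nice a := (hN.sub hNs).const_mul _
  have hB : Nice (sab p n a) := sab_nice hA p n
  have hse : ∀ x, s (sig p n x) = s x := fun x => by simp only [hs, sig_sig]; ring
  have hao : ∀ x, a (sig p n x) = - a x := fun x => by simp only [ha, sig_sig]; ring
  have hbo := sab_odd hn hao
  have e1 : ζ = fun x => s x + a x := by funext x; simp only [hs, ha]; ring
  have e2 : pol p n ζ = fun x => s x + sab p n a x := by funext x; rfl
  have E1 : En ζ ζ = En s s + En a a := by
    conv_lhs => rw [e1]
    rw [En_add hS hA hS hA, En_comm a s, En_even_odd hse hao]; ring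
  have E2 : En (pol p n ζ) (pol p n ζ) = En s s + En (sab p n a) (sab p n a) := by
    rw [e2, En_add hS hB hS hB, En_comm (sab p n a) s, En_even_odd hse hbo]; ring
  have hle := hmin _ (pol_KK hn hp h)
  have o1 := En_odd hA hao
  have o2 := En_odd hB hbo
  set L : ℂ × ℂ → ℝ := fun z => log ‖z.1 - sig p n z.2‖ - log ‖z.1 - z.2‖ with hL
  have I : ∀ {f : ℂ → ℝ}, Nice f → Integrable (fun z : ℂ × ℂ => L z * (f z.1 * f z.2)) (volume.prod volume) := by
    intro f hf
    refine ((int2_sig hf hf p n).sub (int2 hf hf)).congr (Eventually.of_forall fun z => ?_)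
    simp only [hL, Pi.sub_apply]; ring
  have hI := (I hB).sub (I hA)
  have a0 : ∀ x, tt p n x = 0 → a x = 0 := fun x hx => by simp [ha, sig_of_tt hn hx]
  have hnn : ∀ᵐ z ∂((volume : Measure ℂ).prod volume),
      0 ≤ L z * (sab p n a z.1 * sab p n a z.2) - L z * (a z.1 * a z.2) ∧
      (L z * (sab p n a z.1 * sab p n a z.2) - L z * (a z.1 * a z.2) = 0 →
       |tt p n z.1 * a z.1| * |tt p n z.2 * a z.2| = (tt p n z.1 * a z.1) * (tt p n z.2 * a z.2)) := by
    filter_upwards [ae_ne, ae_ne_sig p n] with z h1 h2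
    obtain ⟨l1, l2⟩ := L_sign hn h1 h2
    obtain ⟨k1, k2⟩ := pol_alg (L z) (tt p n z.1) (tt p n z.2) (a z.1) (a z.2) l1 l2
    refine ⟨?_, k2⟩
    have : (if tt p n z.1 * tt p n z.2 = 0 then L z * (a z.1 * a z.2) else 0) = 0 := by
      split_ifs with h3
      · rcases mul_eq_zero.mp h3 with h4 | h4 <;> simp [a0 _ h4]
      · rfl
    rw [this, add_zero] at k1
    exact k1
  have h_int0 : ∫ z, (L z * (sab p n a z.1 * sab p n a z.2) - L z * (a z.1 * a z.2)) ∂((volume : Measure ℂ).prod volume) = 0 := by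
    apply le_antisymm
    · rw [integral_sub (I hB) (I hA)]
      linarith
    · exact integral_nonneg_of_ae (hnn.mono fun z hz => hz.1)
  have hz0 := (integral_eq_zero_iff_of_nonneg_ae (hnn.mono fun z hz => hz.1) hI).mp h_int0
  have hT : Nice (fun x => tt p n x * a x) := hA.mul_bdd (tt_meas p n) (tt_bdd p n)
  have hprod : ∫ z : ℂ × ℂ, |tt p n z.1 * a z.1| * |tt p n z.2 * a z.2| ∂((volume : Measure ℂ).prod volume)
      = ∫ z : ℂ × ℂ, (tt p n z.1 * a z.1) * (tt p n z.2 * a z.2) ∂((volume : Measure ℂ).prod volume) := by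
    apply integral_congr_ae
    filter_upwards [hnn, hz0] with z h1 h2
    exact h1.2 h2
  rw [integral_prod_mul (fun x => |tt p n x * a x|) (fun x => |tt p n x * a x|),
    integral_prod_mul (fun x => tt p n x * a x) (fun x => tt p n x * a x)] at hprod
  have hT0 : ∫ x, tt p n x * a x = 0 := by
    have i1 : Integrable (fun x => tt p n x * ζ x) := (hN.mul_bdd (tt_meas p n) (tt_bdd p n)).integrable
    have i2 : Integrable (fun x => tt p n x * ζ (sig p n x)) := (hNs.mul_bdd (tt_meas p n) (tt_bdd p n)).integrable
    have e3 : ∫ x, tt p n x * ζ (sig p n x) = - ∫ x, tt p n x * ζ x := by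
      rw [← integral_sig p n (fun x => tt p n x * ζ x), ← integral_neg]
      congr 1; funext x; rw [tt_sig hn]; ring
    have e4 : (fun x => tt p n x * a x) = fun x => (1/2) * (tt p n x * ζ x - tt p n x * ζ (sig p n x)) := by
      funext x; simp only [ha]; ring
    rw [e4, integral_const_mul, integral_sub i1 i2, e3, hb]; simp
  rw [hT0, mul_zero, mul_self_eq_zero, integral_eq_zero_iff_of_nonneg (fun x => abs_nonneg _) hT.abs.integrable] at hprod
  filter_upwards [hprod] with x hx
  have hx' : tt p n x * a x = 0 := abs_eq_zero.mp hx
  have hax : a x = 0 := by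
    rcases mul_eq_zero.mp hx' with h1 | h1
    · exact a0 x h1
    · exact h1
  simp only [ha] at hax
  linarith

lemma sig_neg (p n x : ℂ) : sig p (-n) x = sig p n x := by
  unfold sig
  rw [Submodule.reflection_singleton_apply, Submodule.reflection_singleton_apply]
  rw [inner_neg_left, norm_neg]
  simp only [neg_div, neg_smul, smul_neg, neg_neg]

/-- minimizers are symmetric about every line through their barycenter -/
lemma symm_of_min' {R : ℝ} {ζ : ℂ → ℝ} (h : KK R ζ) (hmin : ∀ η, KK R η → En ζ ζ ≤ En η η)
    {p : ℂ} (hb : ∀ n, ∫ x, tt p n x * ζ x = 0) {n : ℂ} (hn : ‖n‖ = 1) :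
    (fun x => ζ (sig p n x)) =ᵐ[volume] ζ := by
  rcases le_total (inner ℝ n p) 0 with h1 | h1
  · exact symm_of_min h hmin hn h1 (hb n)
  · have := symm_of_min h hmin (p := p) (n := -n) (by simpa using hn) (by rw [inner_neg_left]; linarith) (hb _)
    simpa only [sig_neg] using this

lemma bary {R : ℝ} {ζ : ℂ → ℝ} (h : KK R ζ) (n : ℂ) :
    ∫ x, tt ((1/π) • ∫ x, ζ x • x) n x * ζ x = 0 := by
  have i1 : Integrable (fun x : ℂ => ζ x • x) := by
    refine Integrable.mono' ((h.nice.mul_bdd measurable_norm (fun M => ⟨M, fun x hx => by simpa using hx⟩)).integrable) ?_ ?_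
    · exact (h.meas.smul measurable_id).aestronglyMeasurable
    · refine Eventually.of_forall fun x => ?_
      simp only [norm_smul, Real.norm_eq_abs, abs_of_nonneg (h.nn x)]
      rw [mul_comm]
  set v := ∫ x, ζ x • x with hv
  have e : (fun x => tt ((1/π) • v) n x * ζ x) = fun x => inner ℝ n (ζ x • x) - inner ℝ n ((1/π) • v) * ζ x := by
    funext x
    unfold tt
    rw [inner_sub_right, inner_smul_right _ x]; ring
  rw [e, integral_sub, integral_inner i1, integral_const_mul, h.mass, inner_smul_right, ← hv]
  · field_simp; simp
  · exact i1.const_inner n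
  · exact h.nice.integrable.const_mul _

end Turk


namespace Turk

/-- symmetric a.e. about all lines through `p` -/
def Sym (p : ℂ) (ζ : ℂ → ℝ) : Prop := ∀ n : ℂ, ‖n‖ = 1 → (fun x => ζ (sig p n x)) =ᵐ[volume] ζ

lemma pot_sig {p n : ℂ} {ζ : ℂ → ℝ} (h : (fun x => ζ (sig p n x)) =ᵐ[volume] ζ) (x : ℂ) :
    pot ζ (sig p n x) = pot ζ x := by
  unfold pot
  rw [← integral_sig p n]
  simp only [norm_sig_sub]
  apply integral_congr_ae
  filter_upwards [h] with y hy
  rw [hy]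

lemma pot_radial {p : ℂ} {ζ : ℂ → ℝ} (h : Sym p ζ) {x x' : ℂ} (hx : ‖x - p‖ = ‖x' - p‖) :
    pot ζ x = pot ζ x' := by
  by_cases hxx : x = x'
  · rw [hxx]
  have h0 : ‖x - x'‖ ≠ 0 := norm_ne_zero_iff.mpr (sub_ne_zero.mpr hxx)
  set n : ℂ := (‖x - x'‖⁻¹ : ℝ) • (x - x') with hn
  have hn1 : ‖n‖ = 1 := by
    rw [hn, norm_smul, norm_inv, norm_norm, inv_mul_cancel₀ h0]
  have ht : 2 * tt p n x = ‖x - x'‖ := by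
    have e : x - x' = (x - p) - (x' - p) := by ring
    have k : ‖x - x'‖ ^ 2 = 2 * inner ℝ (x - x') (x - p) := by
      have := norm_sub_sq_real (x - p) (x' - p)
      rw [← e] at this
      rw [this]
      conv_rhs => rw [e]
      rw [inner_sub_left (x - p) (x' - p) (x - p), real_inner_self_eq_norm_sq,
        real_inner_comm (x - p) (x' - p), hx]; ring
    unfold tt
    rw [hn, inner_smul_left]
    simp only [map_inv₀, conj_trivial]
    field_simp
    linarith
  have hs : sig p n x = x' := by
    rw [sig_eq hn1, ht, hn, smul_smul, mul_inv_cancel₀ h0, one_smul]; ring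
  rw [← hs, pot_sig (h n hn1)]

/-- radial kernel -/
def lm (p x y : ℂ) : ℝ := log (max ‖x - p‖ ‖y - p‖)

lemma circ_log {p y : ℂ} {r : ℝ} (hr : 0 < r) :
    circleAverage (fun z => log ‖z - y‖) p r = log (max r ‖y - p‖) := by
  rw [circleAverage_log_norm_sub_const_eq_log_radius_add_posLog hr.ne', norm_sub_rev]
  rcases le_total ‖y - p‖ r with h | h
  · rw [max_eq_left h, (posLog_eq_zero_iff _).mpr]
    · simp
    · rw [abs_of_nonneg (by positivity), inv_mul_le_iff₀ hr]; simpa using h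
  · rw [max_eq_right h, posLog_eq_log, Real.log_mul (by positivity), Real.log_inv]
    · ring
    · exact (hr.trans_le h).ne'
    · rw [abs_of_nonneg (by positivity), le_inv_mul_iff₀ hr]; simpa using h

lemma pot_eq {p : ℂ} {ζ : ℂ → ℝ} (hN : Nice ζ) (h : Sym p ζ) {x : ℂ} (hx : x ≠ p) :
    pot ζ x = ∫ y, lm p x y * ζ y := by
  set r := ‖x - p‖ with hr
  have hr0 : 0 < r := norm_pos_iff.mpr (sub_ne_zero.mpr hx)
  have h1 : circleAverage (pot ζ) p r = pot ζ x := by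
    rw [circleAverage_congr_sphere (f₂ := fun _ => pot ζ x)]
    · exact circleAverage_const _ _ _
    · intro z hz
      apply pot_radial h
      simpa [abs_of_pos hr0] using hz
  rw [← h1, circleAverage]
  obtain ⟨C, hC0, b1, b2⟩ := hN.exists_pos
  obtain ⟨D, hD⟩ := unif_bound C (‖p‖ + r)
  have hmeas : Measurable (fun w : ℝ × ℂ => log ‖circleMap p r w.1 - w.2‖ * ζ w.2) := by
    have := hN.1
    have h2 : Measurable (circleMap p r) := (continuous_circleMap p r).measurable
    fun_prop
  have h_int : Integrable (fun w : ℝ × ℂ => log ‖circleMap p r w.1 - w.2‖ * ζ w.2)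
      ((volume.restrict (Ioc 0 (2 * π))).prod volume) := by
    rw [integrable_prod_iff hmeas.aestronglyMeasurable]
    refine ⟨Eventually.of_forall fun θ => hN.log_int (circleMap p r θ), ?_⟩
    have : IsFiniteMeasure (volume.restrict (Ioc 0 (2 * π))) :=
      ⟨by rw [Measure.restrict_apply_univ]; exact measure_Ioc_lt_top⟩
    refine Integrable.of_bound ?_ D (Eventually.of_forall fun θ => ?_)
    · exact hmeas.aestronglyMeasurable.norm.integral_prod_right'
    · rw [Real.norm_of_nonneg (integral_nonneg fun _ => norm_nonneg _)]
      simp only [Real.norm_eq_abs]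
      apply hD ζ hN.1 b1 b2
      have := norm_add_le p (circleMap 0 r θ)
      have e : circleMap p r θ = p + circleMap 0 r θ := by simp [circleMap]
      rw [e]
      refine this.trans ?_
      rw [norm_circleMap_zero, abs_of_pos hr0]
  rw [intervalIntegral.integral_of_le (by positivity)]
  unfold pot
  rw [integral_integral_swap h_int, smul_eq_mul, ← integral_const_mul]
  congr 1; funext y
  have hc := circ_log (p := p) (y := y) hr0
  rw [circleAverage, intervalIntegral.integral_of_le (by positivity), smul_eq_mul] at hc
  rw [integral_mul_const, lm, ← hr, ← hc]
  ring

lemma lm_meas (p : ℂ) : Measurable (fun z : ℂ × ℂ => lm p z.1 z.2) := by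
  unfold lm; fun_prop

lemma log_max_abs (a b : ℝ) : |log (max a b)| ≤ |log a| + |log b| := by
  rcases le_total a b with h | h
  · rw [max_eq_right h]; linarith [abs_nonneg (log a)]
  · rw [max_eq_left h]; linarith [abs_nonneg (log b)]

lemma Nice.log_int' {g : ℂ → ℝ} (hg : Nice g) (p : ℂ) : Integrable (fun x => log ‖x - p‖ * g x) := by
  simpa only [norm_sub_rev p] using hg.log_int p

lemma lm_int {f g : ℂ → ℝ} (hf : Nice f) (hg : Nice g) (p : ℂ) :
    Integrable (fun z : ℂ × ℂ => lm p z.1 z.2 * (f z.1 * g z.2)) (volume.prod volume) := by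
  have i1 := ((hf.log_int' p).mul_prod hg.integrable).norm
  have i2 := (hf.integrable.mul_prod (hg.log_int' p)).norm
  refine (i1.add i2).mono' ?_ (Eventually.of_forall fun z => ?_)
  · exact ((lm_meas p).mul ((hf.1.comp measurable_fst).mul (hg.1.comp measurable_snd))).aestronglyMeasurable
  · simp only [norm_mul, Real.norm_eq_abs, Pi.add_apply]
    have := mul_le_mul_of_nonneg_right (log_max_abs ‖z.1 - p‖ ‖z.2 - p‖)
      (mul_nonneg (abs_nonneg (f z.1)) (abs_nonneg (g z.2)))
    unfold lm
    nlinarith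

lemma En_lm {p : ℂ} {ζ : ℂ → ℝ} (hN : Nice ζ) (h : Sym p ζ) :
    En ζ ζ = ∫ z : ℂ × ℂ, lm p z.1 z.2 * (ζ z.1 * ζ z.2) ∂(volume.prod volume) := by
  rw [En_eq_pot hN hN, integral_prod _ (lm_int hN hN p)]
  apply integral_congr_ae
  have : ∀ᵐ x : ℂ, x ≠ p := by simp [ae_iff]
  filter_upwards [this] with x hx
  rw [pot_eq hN h hx, ← integral_const_mul]
  congr 1; funext y; ring

/-- indicator of the unit disk at p -/
def disk (p : ℂ) : ℂ → ℝ := (Metric.ball p 1).indicator (fun _ => (1:ℝ))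

lemma disk_meas (p : ℂ) : Measurable (disk p) := measurable_const.indicator measurableSet_ball
lemma disk_in {p x : ℂ} (h : ‖x - p‖ < 1) : disk p x = 1 := by
  simp [disk, dist_eq_norm, h]
lemma disk_out {p x : ℂ} (h : 1 ≤ ‖x - p‖) : disk p x = 0 := by
  simp [disk, dist_eq_norm, h]
lemma disk_mass (p : ℂ) : ∫ x, disk p x = π := by
  unfold disk
  rw [integral_indicator measurableSet_ball]
  simp [measureReal_def]
lemma disk_KK {R : ℝ} (hR : 1 < R) : KK R (disk 0) := by
  refine ⟨disk_meas 0, fun x => ?_, fun x => ?_, fun x hx => disk_out (by simpa using hR.le.trans hx), disk_mass 0⟩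
  · rcases lt_or_ge ‖x - 0‖ 1 with h | h
    · rw [disk_in h]; norm_num
    · rw [disk_out h]
  · rcases lt_or_ge ‖x - 0‖ 1 with h | h
    · rw [disk_in h]
    · rw [disk_out h]; norm_num
lemma disk_nice (p : ℂ) : Nice (disk p) := by
  refine Nice.mk' (disk_meas p) 1 (1 + ‖p‖) (fun x => ?_) (fun x hx => disk_out ?_)
  · rcases lt_or_ge ‖x - p‖ 1 with h | h
    · rw [disk_in h]; norm_num
    · rw [disk_out h]; norm_num
  · have := norm_sub_norm_le x p
    linarith
lemma disk_sym (p : ℂ) : Sym p (disk p) := by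
  intro n hn
  refine Eventually.of_forall fun x => ?_
  have e : ‖sig p n x - p‖ = ‖x - p‖ := by
    have := norm_sig_sub p n x p
    rwa [show sig p n p = p by simp [sig]] at this
  rcases lt_or_ge ‖x - p‖ 1 with h | h
  · simp only []
    rw [disk_in h, disk_in (by rwa [e])]
  · simp only []
    rw [disk_out h, disk_out (by rwa [e])]

lemma disk_En (p : ℂ) : En (disk p) (disk p) = En (disk 0) (disk 0) := by
  unfold En
  have mp := (measurePreserving_sub_right (volume : Measure ℂ) p).prod (measurePreserving_sub_right (volume : Measure ℂ) p)
  have := mp.integral_comp' (f := (MeasurableEquiv.subRight p).prodCongr (MeasurableEquiv.subRight p))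
    (fun z : ℂ × ℂ => log ‖z.1 - z.2‖ * (disk 0 z.1 * disk 0 z.2))
  rw [← this]
  congr 1; funext z
  have e : ∀ x, disk p x = disk 0 (x - p) := by
    intro x
    rcases lt_or_ge ‖x - p‖ 1 with h | h
    · rw [disk_in h, disk_in (by simpa using h)]
    · rw [disk_out h, disk_out (by simpa using h)]
  have e2 : z.1 - z.2 = (z.1 - p) - (z.2 - p) := by ring
  rw [e, e, e2]
  rfl

lemma lm_comm (p x y : ℂ) : lm p x y = lm p y x := by
  unfold lm; rw [max_comm]

/-- radial bathtub -/
lemma bath {R : ℝ} {p : ℂ} {ζ : ℂ → ℝ} (hK : KK R ζ) (hS : Sym p ζ) :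
    En (disk p) (disk p) ≤ En ζ ζ ∧ (En ζ ζ = En (disk p) (disk p) → ζ =ᵐ[volume] disk p) := by
  have hN := hK.nice
  have hD := disk_nice p
  set G : ℂ × ℂ → ℝ := fun z => (lm p z.1 z.2 - log (max 1 ‖z.2 - p‖)) *
    ((ζ z.1 - disk p z.1) * (ζ z.2 + disk p z.2)) with hG
  have hA := hN.sub hD
  have hB := hN.add hD
  -- integrability
  have hlog : Integrable (fun y => log (max 1 ‖y - p‖) * (ζ y + disk p y)) := by
    refine ((hB.log_int' p).norm).mono' ?_ (Eventually.of_forall fun y => ?_)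
    · have : Measurable (fun y : ℂ => log (max 1 ‖y - p‖)) := by fun_prop
      exact (this.mul hB.1).aestronglyMeasurable
    · simp only [norm_mul, Real.norm_eq_abs]
      have := log_max_abs 1 ‖y - p‖
      rw [Real.log_one, abs_zero, zero_add] at this
      exact mul_le_mul_of_nonneg_right this (abs_nonneg _)
  have hI2 : Integrable (fun z : ℂ × ℂ => (ζ z.1 - disk p z.1) * (log (max 1 ‖z.2 - p‖) * (ζ z.2 + disk p z.2)))
      (volume.prod volume) := hA.integrable.mul_prod hlog
  have hI1 := lm_int hA hB p
  have hGi : Integrable G (volume.prod volume) := by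
    refine (hI1.sub hI2).congr (Eventually.of_forall fun z => ?_)
    simp only [hG, Pi.sub_apply]; ring
  have hzero : ∫ z : ℂ × ℂ, (ζ z.1 - disk p z.1) * (log (max 1 ‖z.2 - p‖) * (ζ z.2 + disk p z.2)) ∂(volume.prod volume) = 0 := by
    rw [integral_prod_mul (fun x => ζ x - disk p x) (fun y => log (max 1 ‖y - p‖) * (ζ y + disk p y)),
      integral_sub hN.integrable hD.integrable, hK.mass, disk_mass]
    simp
  have hswap : ∫ z : ℂ × ℂ, lm p z.1 z.2 * (disk p z.1 * ζ z.2) ∂(volume.prod volume)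
      = ∫ z : ℂ × ℂ, lm p z.1 z.2 * (ζ z.1 * disk p z.2) ∂(volume.prod volume) := by
    rw [← integral_prod_swap]
    congr 1; funext z
    simp only [Prod.fst_swap, Prod.snd_swap]
    rw [lm_comm]; ring
  have hdiff : En ζ ζ - En (disk p) (disk p) = ∫ z, G z ∂(volume.prod volume) := by
    have e1 : ∫ z, G z ∂(volume.prod volume) = ∫ z : ℂ × ℂ, lm p z.1 z.2 * ((ζ z.1 - disk p z.1) * (ζ z.2 + disk p z.2)) ∂(volume.prod volume) := by
      rw [← sub_zero (∫ z : ℂ × ℂ, lm p z.1 z.2 * _ ∂(volume.prod volume)), ← hzero, ← integral_sub hI1 hI2]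
      congr 1; funext z; simp only [hG]; ring
    have i1 := lm_int hN hN p
    have i2 := lm_int hN hD p
    have i3 := lm_int hD hN p
    have i4 := lm_int hD hD p
    have e2 : ∫ z : ℂ × ℂ, lm p z.1 z.2 * ((ζ z.1 - disk p z.1) * (ζ z.2 + disk p z.2)) ∂(volume.prod volume)
      = (∫ z : ℂ × ℂ, lm p z.1 z.2 * (ζ z.1 * ζ z.2) ∂(volume.prod volume))
       + (∫ z : ℂ × ℂ, lm p z.1 z.2 * (ζ z.1 * disk p z.2) ∂(volume.prod volume))
       - (∫ z : ℂ × ℂ, lm p z.1 z.2 * (disk p z.1 * ζ z.2) ∂(volume.prod volume))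
       - (∫ z : ℂ × ℂ, lm p z.1 z.2 * (disk p z.1 * disk p z.2) ∂(volume.prod volume)) := by
      rw [← integral_add' i1 i2, ← integral_sub' (i1.add i2) i3, ← integral_sub' ((i1.add i2).sub i3) i4]
      congr 1; funext z; simp only [Pi.add_apply, Pi.sub_apply]; ring
    rw [e1, e2, hswap, En_lm hN hS, En_lm hD (disk_sym p)]
    ring
  have hBnn : ∀ y, 0 ≤ ζ y + disk p y := by
    intro y
    have := hK.nn y
    rcases lt_or_ge ‖y - p‖ 1 with h | h
    · rw [disk_in h]; linarith
    · rw [disk_out h]; linarith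
  have hGnn : ∀ z, 0 ≤ G z := by
    intro z
    simp only [hG]
    rw [← mul_assoc]
    refine mul_nonneg ?_ (hBnn _)
    unfold lm
    rcases lt_or_ge ‖z.1 - p‖ 1 with h | h
    · rw [disk_in h]
      apply mul_nonneg_of_nonpos_of_nonpos
      · have hm : max ‖z.1 - p‖ ‖z.2 - p‖ ≤ max 1 ‖z.2 - p‖ := max_le_max_right _ h.le
        rcases (le_max_of_le_left (norm_nonneg (z.1 - p)) : 0 ≤ max ‖z.1 - p‖ ‖z.2 - p‖).eq_or_lt with h0 | h0
        · rw [← h0, Real.log_zero]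
          linarith [Real.log_nonneg (le_max_left 1 ‖z.2 - p‖)]
        · linarith [Real.log_le_log h0 hm]
      · linarith [hK.le z.1]
    · rw [disk_out h]
      apply mul_nonneg
      · have hm : max 1 ‖z.2 - p‖ ≤ max ‖z.1 - p‖ ‖z.2 - p‖ := max_le_max_right _ h
        linarith [Real.log_le_log (by positivity) hm]
      · linarith [hK.nn z.1]
  refine ⟨?_, fun heq => ?_⟩
  · have : 0 ≤ ∫ z, G z ∂((volume : Measure ℂ).prod volume) := integral_nonneg hGnn
    linarith
  · have h0 : ∫ z, G z ∂(volume.prod volume) = 0 := by rw [← hdiff, heq, sub_self]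
    rw [integral_eq_zero_iff_of_nonneg hGnn hGi] at h0
    have h1 := Measure.ae_ae_of_ae_prod h0
    have hs : ∀ᵐ x : ℂ, x ∉ Metric.sphere p 1 := by
      exact measure_eq_zero_iff_ae_notMem.mp (Measure.addHaar_sphere (volume : Measure ℂ) p 1)
    have hp : ∀ᵐ x : ℂ, x ≠ p := by simp [ae_iff]
    filter_upwards [h1, hs, hp] with x hx hxs hxp
    have hpos : volume (Metric.ball p 1) ≠ 0 := (Metric.measure_ball_pos volume p one_pos).ne'
    obtain ⟨y, hy, hGy⟩ : ∃ y ∈ Metric.ball p 1, G (x, y) = 0 := by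
      by_contra! hcon
      apply hpos
      refine measure_mono_null ?_ (ae_iff.mp hx)
      intro y hy
      exact hcon y hy
    have hy1 : ‖y - p‖ < 1 := by simpa [dist_eq_norm] using hy
    have hx1 : ‖x - p‖ ≠ 1 := by simpa [dist_eq_norm] using hxs
    have hx0 : 0 < ‖x - p‖ := norm_pos_iff.mpr (sub_ne_zero.mpr hxp)
    have hfac : 0 < ζ y + disk p y := by rw [disk_in hy1]; linarith [hK.nn y]
    simp only [hG] at hGy
    have hne : lm p x y - log (max 1 ‖y - p‖) ≠ 0 := by
      rw [max_eq_left hy1.le, Real.log_one, sub_zero]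
      unfold lm
      have hm0 : 0 < max ‖x - p‖ ‖y - p‖ := lt_max_of_lt_left hx0
      apply Real.log_ne_zero_of_pos_of_ne_one hm0
      rcases lt_or_gt_of_ne hx1 with h | h
      · exact (max_lt h hy1).ne
      · exact (lt_max_of_lt_left h).ne'
    rcases mul_eq_zero.mp hGy with h | h
    · exact absurd h hne
    · rcases mul_eq_zero.mp h with h | h
      · linarith
      · linarith

end Turk


namespace Turk

/-- indicator of the ball of radius R -/
def bR (R : ℝ) : ℂ → ℝ := (Metric.ball (0:ℂ) R).indicator (fun _ => (1:ℝ))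

lemma bR_nice (R : ℝ) : Nice (bR R) := by
  refine Nice.mk' (measurable_const.indicator measurableSet_ball) 1 R (fun x => ?_) (fun x hx => ?_)
  · by_cases h : x ∈ Metric.ball (0:ℂ) R <;> simp [bR, indicator, h]
  · simp [bR, indicator, hx.le]

lemma KK.le_bR {R : ℝ} {ζ : ℂ → ℝ} (h : KK R ζ) (x : ℂ) : ζ x ≤ bR R x := by
  by_cases hx : ‖x‖ < R
  · simpa [bR, indicator, hx] using h.le x
  · rw [h.supp x (not_lt.mp hx)]; simp [bR, indicator, hx]

lemma KK.mul_bR {R : ℝ} {ζ : ℂ → ℝ} (h : KK R ζ) (x : ℂ) : bR R x * ζ x = ζ x := by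
  by_cases hx : ‖x‖ < R
  · simp [bR, indicator, hx]
  · rw [h.supp x (not_lt.mp hx)]; simp

lemma weak_compact {R : ℝ} (u : ℕ → ℂ → ℝ) (hu : ∀ k, KK R (u k)) :
    ∃ ζ, KK R ζ ∧ ∃ φ : ℕ → ℕ, StrictMono φ ∧ ∀ g : ℂ → ℝ, MemLp g 2 volume →
      Tendsto (fun k => ∫ x, g x * u (φ k) x) atTop (𝓝 (∫ x, g x * ζ x)) := by
  have : Fact ((2:ℝ≥0∞) ≠ ∞) := ⟨by norm_num⟩
  let H := Lp ℝ 2 (volume : Measure ℂ)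
  let U : ℕ → H := fun k => ((hu k).nice.memLp 2).toLp (u k)
  have inn : ∀ (k : ℕ) {g : ℂ → ℝ} (hg : MemLp g 2 volume), inner ℝ (U k) (hg.toLp g) = ∫ x, g x * u k x := by
    intro k g hg
    rw [L2.inner_def]
    apply integral_congr_ae
    filter_upwards [((hu k).nice.memLp 2).coeFn_toLp, hg.coeFn_toLp] with x h1 h2
    rw [h1, h2]; simp
  have hUn : ∀ k, ‖U k‖ ≤ √π := by
    intro k
    apply Real.le_sqrt_of_sq_le
    rw [← real_inner_self_eq_norm_sq]
    have := inn k ((hu k).nice.memLp 2)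
    refine this.le.trans ?_
    rw [← (hu k).mass]
    apply integral_mono_of_nonneg
    · exact Eventually.of_forall fun x => mul_self_nonneg _
    · exact (hu k).nice.integrable
    · exact Eventually.of_forall fun x => mul_le_of_le_one_left ((hu k).nn x) ((hu k).le x)
  let F : ℕ → WeakDual ℝ H := fun k => StrongDual.toWeakDual (InnerProductSpace.toDual ℝ H (U k))
  have hF : ∀ k, F k ∈ (WeakDual.toStrongDual ⁻¹' Metric.closedBall (0 : StrongDual ℝ H) (√π)) := by
    intro k
    simp only [mem_preimage, Metric.mem_closedBall, dist_zero_right]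
    have : WeakDual.toStrongDual (F k) = InnerProductSpace.toDual ℝ H (U k) := rfl
    rw [this, LinearIsometryEquiv.norm_map]
    exact hUn k
  obtain ⟨G, hG, φ, hφ, hlim⟩ := WeakDual.isSeqCompact_closedBall ℝ H 0 (√π) hF
  let v : H := (InnerProductSpace.toDual ℝ H).symm (WeakDual.toStrongDual G)
  have hv : ∀ w : H, Tendsto (fun k => inner ℝ (U (φ k)) w) atTop (𝓝 (inner ℝ v w)) := by
    intro w
    have h1 := ((WeakDual.eval_continuous (𝕜 := ℝ) w).tendsto G).comp hlim
    have h2 : inner ℝ v w = G w := by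
      change inner ℝ ((InnerProductSpace.toDual ℝ H).symm (WeakDual.toStrongDual G)) w = G w
      rw [InnerProductSpace.toDual_symm_apply]; rfl
    rw [h2]
    exact h1
  have hvm : MemLp v 2 volume := Lp.memLp v
  have hv' : ∀ g : ℂ → ℝ, MemLp g 2 volume →
      Tendsto (fun k => ∫ x, g x * u (φ k) x) atTop (𝓝 (∫ x, g x * v x)) := by
    intro g hg
    have h1 := hv (hg.toLp g)
    simp only [inn] at h1
    have h2 : inner ℝ v (hg.toLp g) = ∫ x, g x * v x := by
      rw [L2.inner_def]
      apply integral_congr_ae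
      filter_upwards [hg.coeFn_toLp] with x h2
      rw [h2]; simp
    rwa [h2] at h1
  -- set integrals
  have hset : ∀ s, MeasurableSet s → volume s < ∞ →
      Tendsto (fun k => ∫ x in s, u (φ k) x) atTop (𝓝 (∫ x in s, v x)) := by
    intro s hs hs'
    have h1 := hv' (s.indicator (fun _ => 1)) (memLp_indicator_const 2 hs 1 (Or.inr hs'.ne))
    have h2 : ∀ f : ℂ → ℝ, ∫ x, s.indicator (fun _ => (1:ℝ)) x * f x = ∫ x in s, f x := by
      intro f
      rw [← integral_indicator hs]
      congr 1; funext x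
      by_cases hx : x ∈ s <;> simp [hx]
    simpa only [h2] using h1
  have hiv : ∀ s, MeasurableSet s → volume s < ∞ → IntegrableOn v s := by
    intro s hs hs'
    have : IsFiniteMeasure (volume.restrict s) := ⟨by rwa [Measure.restrict_apply_univ]⟩
    exact memLp_one_iff_integrable.mp ((hvm.restrict s).mono_exponent (by norm_num))
  have v0 : 0 ≤ᵐ[volume] (v : ℂ → ℝ) := by
    apply ae_nonneg_of_forall_setIntegral_nonneg_of_sigmaFinite hiv
    intro s hs hs'
    exact ge_of_tendsto (hset s hs hs') (Eventually.of_forall fun k => integral_nonneg fun x => (hu _).nn x)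
  have hbi := (bR_nice R).integrable
  have v1 : 0 ≤ᵐ[volume] fun x => bR R x - v x := by
    apply ae_nonneg_of_forall_setIntegral_nonneg_of_sigmaFinite
    · intro s hs hs'
      exact hbi.integrableOn.sub (hiv s hs hs')
    · intro s hs hs'
      rw [integral_sub hbi.integrableOn (hiv s hs hs'), sub_nonneg]
      refine le_of_tendsto (hset s hs hs') (Eventually.of_forall fun k => ?_)
      exact integral_mono (hu _).nice.integrable.integrableOn hbi.integrableOn (fun x => (hu _).le_bR x)
  let ζ : ℂ → ℝ := fun x => max 0 (min (bR R x) (v x))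
  have hζv : ζ =ᵐ[volume] v := by
    filter_upwards [v0, v1] with x h0 h1
    have h0' : 0 ≤ v x := h0
    have h1' : v x ≤ bR R x := sub_nonneg.mp h1
    simp only [ζ]
    rw [min_eq_right h1', max_eq_right h0']
  have hlim' : ∀ g : ℂ → ℝ, MemLp g 2 volume →
      Tendsto (fun k => ∫ x, g x * u (φ k) x) atTop (𝓝 (∫ x, g x * ζ x)) := by
    intro g hg
    have : ∫ x, g x * ζ x = ∫ x, g x * v x := by
      apply integral_congr_ae
      filter_upwards [hζv] with x hx
      rw [hx]
    rw [this]; exact hv' g hg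
  have hsupp : ∀ x, R ≤ ‖x‖ → ζ x = 0 := by
    intro x hx
    have : bR R x = 0 := by simp [bR, indicator, hx]
    simp only [ζ, this]
    exact max_eq_left (min_le_left _ _)
  have hbR1 : ∀ x, bR R x ≤ 1 := fun x => by
    by_cases hx : ‖x‖ < R <;> simp [bR, indicator, hx]
  refine ⟨ζ, ⟨?_, fun x => le_max_left _ _, fun x => ?_, hsupp, ?_⟩, φ, hφ, hlim'⟩
  · exact measurable_const.max ((bR_nice R).1.min (Lp.stronglyMeasurable v).measurable)
  · exact max_le zero_le_one ((min_le_left _ _).trans (hbR1 x))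
  · have h1 := hlim' (bR R) ((bR_nice R).memLp 2)
    simp only [KK.mul_bR (hu _), (hu _).mass] at h1
    have h2 : ∀ x, bR R x * ζ x = ζ x := by
      intro x
      by_cases hx : ‖x‖ < R
      · simp [bR, indicator, hx]
      · rw [hsupp x (not_lt.mp hx)]; simp
    simp only [h2] at h1
    exact tendsto_nhds_unique h1 tendsto_const_nhds

lemma pot_meas {g : ℂ → ℝ} (hg : Nice g) : Measurable (pot g) := by
  have hm : Measurable (fun z : ℂ × ℂ => log ‖z.1 - z.2‖ * g z.2) := by
    have := hg.1; fun_prop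
  exact hm.stronglyMeasurable.integral_prod_right.measurable

lemma En_tendsto {R : ℝ} {u : ℕ → ℂ → ℝ} (hu : ∀ k, KK R (u k)) {ζ : ℂ → ℝ} (hζ : KK R ζ)
    (h : ∀ g : ℂ → ℝ, MemLp g 2 volume → Tendsto (fun k => ∫ x, g x * u k x) atTop (𝓝 (∫ x, g x * ζ x))) :
    Tendsto (fun k => En (u k) (u k)) atTop (𝓝 (En ζ ζ)) := by
  have hpw : ∀ x, Tendsto (fun k => pot (u k) x) atTop (𝓝 (pot ζ x)) := by
    intro x
    have := h _ ((bR_nice R).log_memLp x)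
    simp only [mul_assoc, KK.mul_bR (hu _), KK.mul_bR hζ] at this
    exact this
  -- uniform bound
  obtain ⟨D, hD⟩ := unif_bound (max 1 R) R
  have hb : ∀ {η : ℂ → ℝ}, KK R η → ∀ x, ‖x‖ ≤ R → |pot η x| ≤ D := by
    intro η hη x hx
    refine (abs_integral_le_integral_abs).trans (hD η hη.meas ?_ ?_ x hx)
    · intro y; rw [abs_of_nonneg (hη.nn y)]; exact (hη.le y).trans (le_max_left _ _)
    · intro y hy; exact hη.supp y ((le_max_right _ _).trans hy.le)
  have hbb : ∀ {η : ℂ → ℝ}, KK R η → ∀ x, |bR R x * pot η x| ≤ bR R x * D := by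
    intro η hη x
    by_cases hx : ‖x‖ < R
    · simpa [bR, indicator, hx] using hb hη x hx.le
    · simp [bR, indicator, hx]
  have hNp : ∀ {η : ℂ → ℝ}, KK R η → Nice (fun x => bR R x * pot η x) := by
    intro η hη
    refine Nice.mk' ((bR_nice R).1.mul (pot_meas hη.nice)) (|D|) R (fun x => ?_) (fun x hx => ?_)
    · refine (hbb hη x).trans ?_
      by_cases hx : ‖x‖ < R
      · simpa [bR, indicator, hx] using le_abs_self D
      · simp [bR, indicator, hx]
    · simp [bR, indicator, hx.le]
  have hEn : ∀ {η θ : ℂ → ℝ}, KK R η → KK R θ → En η θ = ∫ x, (bR R x * pot θ x) * η x := by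
    intro η θ hη hθ
    rw [En_eq_pot hη.nice hθ.nice]
    congr 1; funext x
    rw [mul_right_comm, hη.mul_bR]
  have h1 : Tendsto (fun k => ∫ x, (bR R x * pot ζ x) * u k x) atTop (𝓝 (En ζ ζ)) := by
    rw [hEn hζ hζ]
    exact h _ ((hNp hζ).memLp 2)
  have h2 : Tendsto (fun k => ∫ x, |bR R x * pot (u k) x - bR R x * pot ζ x|) atTop (𝓝 0) := by
    have h3 := tendsto_integral_of_dominated_convergence (F := fun k x => |bR R x * pot (u k) x - bR R x * pot ζ x|)
      (f := fun _ => (0:ℝ)) (μ := (volume : Measure ℂ)) (fun x => bR R x * D + bR R x * D) ?_ ?_ ?_ ?_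
    · simpa using h3
    · intro k; exact ((hNp (hu k)).sub (hNp hζ)).abs.1.aestronglyMeasurable
    · exact ((bR_nice R).integrable.mul_const D).add ((bR_nice R).integrable.mul_const D)
    · intro k
      refine Eventually.of_forall fun x => ?_
      rw [Real.norm_eq_abs, abs_abs]
      exact (abs_sub _ _).trans (add_le_add (hbb (hu k) x) (hbb hζ x))
    · refine Eventually.of_forall fun x => ?_
      have := (((hpw x).const_mul (bR R x)).sub_const (bR R x * pot ζ x)).abs
      simpa using this
  have h3 : Tendsto (fun k => En (u k) (u k) - ∫ x, (bR R x * pot ζ x) * u k x) atTop (𝓝 0) := by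
    refine squeeze_zero_norm (fun k => ?_) h2
    have hbd : ∀ {η : ℂ → ℝ}, KK R η → Integrable (fun x => (bR R x * pot η x) * u k x) := by
      intro η hη
      refine (hNp hη).integrable.mul_bdd (c := 1) (hu k).meas.aestronglyMeasurable (Eventually.of_forall fun x => ?_)
      rw [Real.norm_eq_abs, abs_of_nonneg ((hu k).nn x)]; exact (hu k).le x
    rw [hEn (hu k) (hu k), ← integral_sub (hbd (hu k)) (hbd hζ)]
    refine (norm_integral_le_integral_norm _).trans ?_
    apply integral_mono_of_nonneg
    · exact Eventually.of_forall fun x => norm_nonneg _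
    · exact ((hNp (hu k)).sub (hNp hζ)).abs.integrable
    · refine Eventually.of_forall fun x => ?_
      simp only [Real.norm_eq_abs]
      rw [← sub_mul, abs_mul, abs_of_nonneg ((hu k).nn x)]
      exact mul_le_of_le_one_right (abs_nonneg _) ((hu k).le x)
  have := h3.add h1
  simpa using this

lemma exists_min {R : ℝ} (hR : 1 < R) : ∃ ζ, KK R ζ ∧ ∀ η, KK R η → En ζ ζ ≤ En η η := by
  let S : Set ℝ := {e | ∃ η, KK R η ∧ e = En η η}
  have hne : S.Nonempty := ⟨_, disk 0, disk_KK hR, rfl⟩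
  have hbdd : BddBelow S := by
    by_contra hcon
    rw [not_bddBelow_iff] at hcon
    have : ∀ k : ℕ, ∃ η, KK R η ∧ En η η < -(k:ℝ) := by
      intro k
      obtain ⟨e, ⟨η, hη, rfl⟩, h⟩ := hcon (-(k:ℝ))
      exact ⟨η, hη, h⟩
    choose u hu hlt using this
    obtain ⟨ζ, hζ, φ, hφ, hlim⟩ := weak_compact u hu
    have h1 := En_tendsto (fun k => hu (φ k)) hζ hlim
    have h2 : Tendsto (fun k => En (u (φ k)) (u (φ k))) atTop atBot := by
      refine tendsto_atBot_mono (fun k => (hlt (φ k)).le) ?_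
      exact tendsto_neg_atTop_atBot.comp (tendsto_natCast_atTop_atTop.comp hφ.tendsto_atTop)
    exact not_tendsto_nhds_of_tendsto_atBot h2 _ h1
  obtain ⟨e, -, he, heS⟩ := exists_seq_tendsto_sInf hne hbdd
  choose u hu hue using heS
  obtain ⟨ζ, hζ, φ, hφ, hlim⟩ := weak_compact u hu
  have h1 := En_tendsto (fun k => hu (φ k)) hζ hlim
  have h2 := he.comp hφ.tendsto_atTop
  have h3 : En ζ ζ = sInf S := by
    refine tendsto_nhds_unique h1 ?_
    refine h2.congr fun k => ?_
    exact hue (φ k)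
  exact ⟨ζ, hζ, fun η hη => h3 ▸ csInf_le hbdd ⟨η, hη, rfl⟩⟩

/-- Main theorem on ℂ. -/
lemma main_C {R : ℝ} (hR : 1 < R) {ζ : ℂ → ℝ} (h : KK R ζ) (hb : ∫ x, ζ x • x = 0) :
    En (disk 0) (disk 0) ≤ En ζ ζ ∧ (En ζ ζ = En (disk 0) (disk 0) → ζ =ᵐ[volume] disk 0) := by
  have hall : ∀ η, KK R η → En (disk 0) (disk 0) ≤ En η η := by
    obtain ⟨ζ₀, h0, hmin⟩ := exists_min hR
    have hsym : Sym ((1/π) • ∫ x, ζ₀ x • x) ζ₀ := fun n hn => symm_of_min' h0 hmin (bary h0) hn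
    have := (bath h0 hsym).1
    rw [disk_En] at this
    exact fun η hη => this.trans (hmin η hη)
  refine ⟨hall ζ h, fun heq => ?_⟩
  have hbar : ∀ n, ∫ x, tt 0 n x * ζ x = 0 := by
    intro n
    have := bary h n
    rw [hb, smul_zero] at this
    exact this
  have hsym : Sym 0 ζ := fun n hn => symm_of_min' h (fun η hη => heq ▸ hall η hη) hbar hn
  exact (bath h hsym).2 heq

end Turk


namespace Turk

/-- the isometry between the complex plane and the Euclidean plane -/
def ee : ℂ ≃ₗᵢ[ℝ] E2 := Complex.orthonormalBasisOneI.repr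

lemma ee_mp : MeasurePreserving ee volume volume := ee.measurePreserving

lemma ee_int {G : Type*} [NormedAddCommGroup G] [NormedSpace ℝ G] (g : E2 → G) :
    ∫ z, g (ee z) = ∫ x, g x :=
  ee_mp.integral_comp ee.toHomeomorph.measurableEmbedding g

lemma TF_congr {R : ℝ} {ζ g : E2 → ℝ} (h : ζ =ᵐ[volume.restrict (Metric.ball (0:E2) R)] g) :
    TF R ζ = TF R g := by
  unfold TF
  congr 1
  apply integral_congr_ae
  filter_upwards [h] with x hx
  apply integral_congr_ae
  filter_upwards [h] with y hy
  rw [hx, hy]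

lemma TF_eq {R : ℝ} {g : E2 → ℝ} (h0 : ∀ x, x ∉ Metric.ball (0:E2) R → g x = 0)
    (hN : Nice (fun z => g (ee z))) :
    TF R g = -((1/(4*π)) * (1/(2*π))) * En (fun z => g (ee z)) (fun z => g (ee z)) := by
  have hin : ∀ x, ∫ y in Metric.ball (0:E2) R, ((1/(2*π)) * Real.log (‖x - y‖⁻¹)) * g x * g y
      = ∫ y, ((1/(2*π)) * Real.log (‖x - y‖⁻¹)) * g x * g y := fun x =>
    setIntegral_eq_integral_of_forall_compl_eq_zero (fun y hy => by rw [h0 y hy, mul_zero])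
  unfold TF
  simp only [hin]
  rw [setIntegral_eq_integral_of_forall_compl_eq_zero (fun x hx => by simp [h0 x hx]),
    ← ee_int, En_eq_pot hN hN, neg_mul, mul_assoc, ← mul_neg]
  congr 1
  rw [← integral_const_mul, ← integral_neg]
  congr 1
  funext x
  rw [← ee_int, pot]
  simp only [← map_sub, LinearIsometryEquiv.norm_map, Real.log_inv]
  rw [← integral_const_mul, ← integral_const_mul, ← integral_neg]
  congr 1; funext y; ring

/-- nice representative -/
lemma exists_rep {R : ℝ} {ζ : E2 → ℝ} (h : ζ ∈ TK R) :
    ∃ g : E2 → ℝ, ζ =ᵐ[volume.restrict (Metric.ball (0:E2) R)] g ∧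
      (∀ x, x ∉ Metric.ball (0:E2) R → g x = 0) ∧ KK R (fun z => g (ee z)) := by
  obtain ⟨hm, hb, hmass⟩ := h
  let g : E2 → ℝ := (Metric.ball (0:E2) R).indicator (fun x => max 0 (min 1 (hm.mk ζ x)))
  have hg0 : ∀ x, x ∉ Metric.ball (0:E2) R → g x = 0 := fun x hx => indicator_of_notMem hx _
  have hg : ζ =ᵐ[volume.restrict (Metric.ball (0:E2) R)] g := by
    filter_upwards [hm.ae_eq_mk, hb, ae_restrict_mem measurableSet_ball] with x h1 h2 h3
    simp only [g, indicator_of_mem h3, ← h1]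
    rw [min_eq_right h2.2, max_eq_right h2.1]
  have hgm : Measurable g :=
    (measurable_const.max (measurable_const.min hm.measurable_mk)).indicator measurableSet_ball
  refine ⟨g, hg, hg0, ⟨hgm.comp ee.continuous.measurable, fun x => ?_, fun x => ?_, fun x hx => ?_, ?_⟩⟩
  · exact indicator_nonneg (fun y _ => le_max_left _ _) _
  · exact indicator_apply_le' (fun _ => max_le zero_le_one (min_le_left _ _)) (fun _ => zero_le_one)
  · apply hg0; simpa using hx
  · rw [ee_int g, ← hmass, integral_congr_ae hg,
      setIntegral_eq_integral_of_forall_compl_eq_zero hg0]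

lemma disk_ee (z : ℂ) :
    Set.indicator (Metric.ball (0:E2) 1) (fun _ => (1:ℝ)) (ee z) = disk 0 z := by
  simp [disk, indicator]

lemma disk_ee' :
    (fun z => Set.indicator (Metric.ball (0:E2) 1) (fun _ => (1:ℝ)) (ee z)) = disk 0 :=
  funext disk_ee

lemma ind_out {R : ℝ} (hR : 1 < R) (x : E2) (hx : x ∉ Metric.ball (0:E2) R) :
    Set.indicator (Metric.ball (0:E2) 1) (fun _ => (1:ℝ)) x = 0 :=
  indicator_of_notMem (fun h => hx (Metric.ball_subset_ball hR.le h)) _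

end Turk

open Turk

theorem stmt15 (R : ℝ) (hR : 1 < R) :
    (Set.indicator (Metric.ball (0:E2) 1) (fun _ => (1:ℝ)) ∈ TK R ∧
      (∫ x in Metric.ball (0:E2) R,
        Set.indicator (Metric.ball (0:E2) 1) (fun _ => (1:ℝ)) x • x) = 0) ∧
    ∀ ζ ∈ TK R, (∫ x in Metric.ball (0:E2) R, ζ x • x) = 0 →
      TF R ζ ≤ TF R (Set.indicator (Metric.ball (0:E2) 1) (fun _ => (1:ℝ))) ∧
      (TF R ζ = TF R (Set.indicator (Metric.ball (0:E2) 1) (fun _ => (1:ℝ))) →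
        ζ =ᵐ[volume.restrict (Metric.ball (0:E2) R)]
          Set.indicator (Metric.ball (0:E2) 1) (fun _ => (1:ℝ))) := by
  refine ⟨⟨⟨?_, ?_, ?_⟩, ?_⟩, ?_⟩
  · exact (measurable_const.indicator measurableSet_ball).aemeasurable
  · refine Eventually.of_forall fun x => ?_
    by_cases hx : x ∈ Metric.ball (0:E2) 1
    · rw [indicator_of_mem hx]; norm_num
    · rw [indicator_of_notMem hx]; norm_num
  · rw [setIntegral_eq_integral_of_forall_compl_eq_zero (ind_out hR), ← ee_int, disk_ee', disk_mass]
  · rw [setIntegral_eq_integral_of_forall_compl_eq_zero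
      (fun x hx => by rw [ind_out hR x hx, zero_smul])]
    set I := ∫ x : E2, Set.indicator (Metric.ball (0:E2) 1) (fun _ => (1:ℝ)) x • x with hI
    have h1 : I = -I := by
      conv_lhs => rw [hI, ← integral_neg_eq_self]
      rw [hI, ← integral_neg]
      congr 1; funext x
      simp [indicator]
    have h2 : (2:ℝ) • I = 0 := by rw [two_smul]; nth_rewrite 1 [h1]; exact neg_add_cancel I
    exact (smul_eq_zero.mp h2).resolve_left two_ne_zero
  · intro ζ hζ hc
    obtain ⟨g, hg, hg0, hK⟩ := exists_rep hζ
    have hbar : ∫ z : ℂ, g (ee z) • z = 0 := by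
      have h1 : ∫ x : E2, g x • x = 0 := by
        rw [← hc, ← setIntegral_eq_integral_of_forall_compl_eq_zero (s := Metric.ball (0:E2) R)
          (fun x hx => by rw [hg0 x hx, zero_smul])]
        apply integral_congr_ae
        filter_upwards [hg] with x hx
        rw [hx]
      have h2 : ee (∫ z : ℂ, g (ee z) • z) = 0 := by
        have := ee.toContinuousLinearEquiv.integral_comp_comm (μ := volume) (fun z : ℂ => g (ee z) • z)
        rw [← h1, ← ee_int]
        refine this.symm.trans ?_
        congr 1; funext z
        exact map_smul ee _ _
      exact ee.map_eq_zero_iff.mp h2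
    obtain ⟨hle, heq⟩ := main_C hR hK hbar
    have hc0 : 0 < (1/(4*π)) * (1/(2*π)) := by positivity
    have hd : TF R (Set.indicator (Metric.ball (0:E2) 1) (fun _ => (1:ℝ))) =
        -((1/(4*π)) * (1/(2*π))) * En (disk 0) (disk 0) := by
      have h3 := TF_eq (R := R) (g := Set.indicator (Metric.ball (0:E2) 1) (fun _ => (1:ℝ)))
        (ind_out hR) (by rw [disk_ee']; exact (disk_KK hR).nice)
      rw [disk_ee'] at h3
      exact h3
    rw [hd, TF_congr hg, TF_eq hg0 hK.nice]
    constructor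
    · rw [neg_mul, neg_mul, neg_le_neg_iff]
      exact mul_le_mul_of_nonneg_left hle hc0.le
    · intro he
      have h4 := heq (mul_left_cancel₀ (neg_ne_zero.mpr hc0.ne') he)
      have h5 := ee.symm.measurePreserving.quasiMeasurePreserving.ae h4
      have h6 := ae_restrict_of_ae (s := Metric.ball (0:E2) R) h5
      filter_upwards [hg, h6] with x h7 h8
      rw [← disk_ee] at h8
      simp only [LinearIsometryEquiv.apply_symm_apply] at h8
      rw [h7, h8]
end
end
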